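/- arXiv:2408.17232 — 5 statements merged into one kernel-verified Lean document; each statement's English description precedes it below -/
import Mathlib

section
/- For every n ≥ 1, the number of crystallized linear chord diagrams with n chords having exactly one short chord is R_{n,1} = (n − 1)!. -/
namespace ChordBubbles

/-- A linear chord diagram with `n` chords: a fixed-point-free involution of `Fin (2*n)`. -/
def IsDiagram (n : ℕ) (f : Equiv.Perm (Fin (2 * n))) : Prop :=
  (∀ i, f (f i) = i) ∧ ∀ i, f i ≠ i

/-- Vertex `i` is an endpoint of a short chord (a chord joining adjacent vertices). -/
def ShortEnd (n : ℕ) (f : Equiv.Perm (Fin (2 * n))) (i : Fin (2 * n)) : Prop :=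
  (f i).val = i.val + 1 ∨ (f i).val + 1 = i.val

/-- `[a, b]` delimits a bubble: a maximal nonempty interval of vertices none of which is an
endpoint of a short chord. -/
def IsBubble (n : ℕ) (f : Equiv.Perm (Fin (2 * n))) (a b : ℕ) : Prop :=
  a ≤ b ∧ b < 2 * n ∧
  (∀ i : Fin (2 * n), a ≤ i.val → i.val ≤ b → ¬ ShortEnd n f i) ∧
  (a = 0 ∨ ∃ j : Fin (2 * n), j.val + 1 = a ∧ ShortEnd n f j) ∧
  (b + 1 = 2 * n ∨ ∃ j : Fin (2 * n), j.val = b + 1 ∧ ShortEnd n f j)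

/-- The size (number of vertices) of the bubble `[a, b]`. -/
def bubbleSize (a b : ℕ) : ℕ := b + 1 - a

/-- The number of bridges of the bubble `[a, b]` under the diagram `f`: the number of chords
joining a vertex inside the bubble to one outside it. -/
noncomputable def bridges (n : ℕ) (f : Equiv.Perm (Fin (2 * n))) (a b : ℕ) : ℕ :=
  Nat.card {i : Fin (2 * n) // (a ≤ i.val ∧ i.val ≤ b) ∧ ¬ (a ≤ (f i).val ∧ (f i).val ≤ b)}

/-- `N n q b` : the number of pairs (diagram, bubble) where the diagram has `n` chords and the
bubble has size `q` and exactly `b` bridges. -/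
noncomputable def N (n q b : ℕ) : ℕ :=
  Nat.card {p : Equiv.Perm (Fin (2 * n)) × ℕ × ℕ //
    IsDiagram n p.1 ∧ IsBubble n p.1 p.2.1 p.2.2 ∧
    bubbleSize p.2.1 p.2.2 = q ∧ bridges n p.1 p.2.1 p.2.2 = b}

/-- A diagram is crystallized when all its bubbles are empty, i.e., no chord joins two vertices
lying in the same bubble. -/
def Crystallized (n : ℕ) (f : Equiv.Perm (Fin (2 * n))) : Prop :=
  ∀ a b, IsBubble n f a b → ∀ i : Fin (2 * n),
    a ≤ i.val → i.val ≤ b → ¬ (a ≤ (f i).val ∧ (f i).val ≤ b)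

/-- The number of short chords of a diagram. -/
noncomputable def shortChords (n : ℕ) (f : Equiv.Perm (Fin (2 * n))) : ℕ :=
  Nat.card {i : Fin (2 * n) // (f i).val = i.val + 1}

/-- `R n k` : the number of crystallized diagrams with `n` chords, exactly `k` of them short. -/
noncomputable def R (n k : ℕ) : ℕ :=
  Nat.card {f : Equiv.Perm (Fin (2 * n)) //
    IsDiagram n f ∧ Crystallized n f ∧ shortChords n f = k}

/-- The diagram map attached to a permutation of `Fin m`. -/
def F (m : ℕ) (σ : Equiv.Perm (Fin m)) (i : Fin (2 * (m + 1))) : Fin (2 * (m + 1)) :=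
  if h : i.val < m then ⟨m + 2 + (σ ⟨i.val, h⟩).val, by have := (σ ⟨i.val, h⟩).isLt; omega⟩
  else if h1 : i.val = m then ⟨m + 1, by omega⟩
  else if h2 : i.val = m + 1 then ⟨m, by omega⟩
  else ⟨(σ.symm ⟨i.val - (m + 2), by have := i.isLt; omega⟩).val, by
    have := (σ.symm ⟨i.val - (m + 2), by have := i.isLt; omega⟩).isLt; omega⟩

lemma F_lt (m : ℕ) (σ : Equiv.Perm (Fin m)) (i : Fin (2 * (m + 1))) (h : i.val < m) :
    (F m σ i).val = m + 2 + (σ ⟨i.val, h⟩).val := by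
  simp [F, h]

lemma F_m (m : ℕ) (σ : Equiv.Perm (Fin m)) (i : Fin (2 * (m + 1))) (h : i.val = m) :
    (F m σ i).val = m + 1 := by
  simp [F, h]

lemma F_m1 (m : ℕ) (σ : Equiv.Perm (Fin m)) (i : Fin (2 * (m + 1))) (h : i.val = m + 1) :
    (F m σ i).val = m := by
  simp [F, h]

lemma F_gt (m : ℕ) (σ : Equiv.Perm (Fin m)) (i : Fin (2 * (m + 1))) (j : Fin m)
    (h : i.val = m + 2 + j.val) :
    (F m σ i).val = (σ.symm j).val := by
  have h1 : ¬ i.val < m := by omega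
  have h2 : ¬ i.val = m := by omega
  have h3 : ¬ i.val = m + 1 := by omega
  have h4 : (⟨i.val - (m + 2), by have := i.isLt; omega⟩ : Fin m) = j := by
    apply Fin.ext; simp; omega
  simp only [F, h1, h2, h3, dite_false, h4]

lemma cases4 (m : ℕ) (i : Fin (2 * (m + 1))) :
    i.val < m ∨ i.val = m ∨ i.val = m + 1 ∨ ∃ j : Fin m, i.val = m + 2 + j.val := by
  by_cases h : i.val < m + 2
  · omega
  · exact Or.inr (Or.inr (Or.inr ⟨⟨i.val - (m + 2), by have := i.isLt; omega⟩, by simp; omega⟩))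

lemma F_inv (m : ℕ) (σ : Equiv.Perm (Fin m)) : Function.Involutive (F m σ) := by
  intro i
  apply Fin.ext
  rcases cases4 m i with h | h | h | ⟨j, h⟩
  · rw [F_gt m σ _ _ (F_lt m σ i h)]; simp
  · rw [F_m1 m σ _ (F_m m σ i h), h]
  · rw [F_m m σ _ (F_m1 m σ i h), h]
  · have h1 := F_gt m σ i j h
    have h2 : (F m σ i).val < m := by rw [h1]; exact (σ.symm j).isLt
    rw [F_lt m σ _ h2]
    have : (⟨(F m σ i).val, h2⟩ : Fin m) = σ.symm j := Fin.ext h1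
    rw [this, h]; simp

lemma F_good (m : ℕ) (σ : Equiv.Perm (Fin m)) :
    IsDiagram (m + 1) (F_inv m σ).toPerm ∧ Crystallized (m + 1) (F_inv m σ).toPerm ∧
      shortChords (m + 1) (F_inv m σ).toPerm = 1 := by
  refine ⟨⟨fun i => F_inv m σ i, fun i => ?_⟩, ?_, ?_⟩
  · intro hi
    have hi : (F m σ i).val = i.val := congrArg Fin.val hi
    rcases cases4 m i with h | h | h | ⟨j, h⟩
    · have := F_lt m σ i h; omega
    · have := F_m m σ i h; omega
    · have := F_m1 m σ i h; omega
    · have := F_gt m σ i j h; have := (σ.symm j).isLt; omega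
  · rintro a b ⟨-, -, hab, -, -⟩ i h1 h2 ⟨h3, h4⟩
    change a ≤ (F m σ i).val at h3
    change (F m σ i).val ≤ b at h4
    have key : a ≤ m + 1 ∧ m ≤ b ∧ ((a ≤ m) ∨ (m + 1 ≤ b)) ∧ (a ≤ m ∧ m ≤ b) := by
      rcases cases4 m i with h | h | h | ⟨j, h⟩
      · have := F_lt m σ i h; omega
      · have := F_m m σ i h; omega
      · have := F_m1 m σ i h; omega
      · have := F_gt m σ i j h; have := (σ.symm j).isLt; omega
    exact hab ⟨m, by omega⟩ key.2.2.2.1 key.2.2.2.2 (Or.inl (F_m m σ ⟨m, by omega⟩ rfl))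
  · unfold shortChords
    rw [Nat.card_eq_one_iff_exists]
    refine ⟨⟨⟨m, by omega⟩, F_m m σ ⟨m, by omega⟩ rfl⟩, ?_⟩
    rintro ⟨i, hi⟩
    apply Subtype.ext
    apply Fin.ext
    change (F m σ i).val = i.val + 1 at hi
    change i.val = m
    rcases cases4 m i with h | h | h | ⟨j, h⟩
    · have := F_lt m σ i h; omega
    · exact h
    · have := F_m1 m σ i h; omega
    · have := F_gt m σ i j h; have := (σ.symm j).isLt; omega

lemma structure_lem (m : ℕ) (f : Equiv.Perm (Fin (2 * (m + 1)))) (hd : IsDiagram (m + 1) f)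
    (hc : Crystallized (m + 1) f) (hs : shortChords (m + 1) f = 1) :
    (∀ i, i.val = m → (f i).val = m + 1) ∧ (∀ i, i.val < m → m + 2 ≤ (f i).val) := by
  unfold shortChords at hs
  rw [Nat.card_eq_one_iff_exists] at hs
  obtain ⟨⟨s, hs⟩, hu⟩ := hs
  have hu' : ∀ i, (f i).val = i.val + 1 → i = s := fun i hi => congrArg Subtype.val (hu ⟨i, hi⟩)
  have hse : ∀ i, ShortEnd (m + 1) f i → i.val = s.val ∨ i.val = s.val + 1 := by
    rintro i (h | h)
    · left; rw [hu' i h]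
    · right
      have := hu' (f i) (by rw [hd.1]; omega)
      rw [← this]; omega
  have hs' : f (f s) = s := hd.1 s
  have hlt := (f s).isLt
  have e1 : ShortEnd (m + 1) f s := Or.inl hs
  have e2 : ShortEnd (m + 1) f (f s) := Or.inr (by rw [hs']; omega)
  have hne : ∀ i, i.val ≠ s.val → i.val ≠ s.val + 1 →
      (f i).val ≠ s.val ∧ (f i).val ≠ s.val + 1 := by
    intro i h1 h2
    constructor
    · intro h
      have : f i = s := Fin.ext h
      have : i = f s := by rw [← this, hd.1]
      apply h2; rw [this]; omega
    · intro h
      have : f i = f s := Fin.ext (by omega)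
      have := f.injective this
      apply h1; rw [this]
  have hL : ∀ i, i.val < s.val → s.val + 2 ≤ (f i).val := by
    intro i hi
    have hb : IsBubble (m + 1) f 0 (s.val - 1) := by
      refine ⟨by omega, by omega, ?_, Or.inl rfl, Or.inr ⟨s, by omega, e1⟩⟩
      intro j _ hj hj'
      have := hse j hj'
      omega
    have := hc _ _ hb i (by omega) (by omega)
    have := hne i (by omega) (by omega)
    omega
  have hR : ∀ i, s.val + 2 ≤ i.val → (f i).val < s.val := by
    intro i hi
    have hb : IsBubble (m + 1) f (s.val + 2) (2 * (m + 1) - 1) := by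
      refine ⟨by omega, by omega, ?_, Or.inr ⟨f s, by omega, e2⟩, Or.inl (by omega)⟩
      intro j hj _ hj'
      have := hse j hj'
      omega
    have := hc _ _ hb i (by omega) (by omega)
    have := hne i (by omega) (by omega)
    omega
  have c1 : s.val ≤ 2 * m - s.val := by
    let g : Fin s.val → Fin (2 * m - s.val) := fun i =>
      ⟨(f ⟨i.val, by omega⟩).val - (s.val + 2), by
        have := hL ⟨i.val, by omega⟩ i.isLt
        have := (f ⟨i.val, by omega⟩).isLt
        omega⟩
    have hg : Function.Injective g := by
      intro i j hij
      have hij := congrArg Fin.val hij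
      simp only [g] at hij
      have h1 := hL ⟨i.val, by omega⟩ i.isLt
      have h2 := hL ⟨j.val, by omega⟩ j.isLt
      have := f.injective (Fin.ext (by omega) : f ⟨i.val, by omega⟩ = f ⟨j.val, by omega⟩)
      exact Fin.ext (by simpa using this)
    simpa using Fintype.card_le_of_injective g hg
  have c2 : 2 * m - s.val ≤ s.val := by
    let g : Fin (2 * m - s.val) → Fin s.val := fun i =>
      ⟨(f ⟨i.val + (s.val + 2), by omega⟩).val, hR _ (by simp)⟩
    have hg : Function.Injective g := by
      intro i j hij
      have hij := congrArg Fin.val hij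
      simp only [g] at hij
      have := congrArg Fin.val (f.injective (Fin.ext hij))
      simp only at this
      exact Fin.ext (by omega)
    simpa using Fintype.card_le_of_injective g hg
  have hsm : s.val = m := by omega
  refine ⟨fun i hi => ?_, fun i hi => ?_⟩
  · have : i = s := Fin.ext (by omega)
    rw [this]; omega
  · have := hL i (by omega); omega

/-- The number of crystallized diagrams with `n` chords and exactly one short chord is
`(n-1)!`. -/
theorem R_n_one (n : ℕ) (hn : 1 ≤ n) : R n 1 = Nat.factorial (n - 1) := by
  obtain ⟨m, rfl⟩ : ∃ m, n = m + 1 := ⟨n - 1, by omega⟩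
  have hcard : Nat.card (Equiv.Perm (Fin m)) = Nat.factorial (m + 1 - 1) := by
    rw [Nat.card_perm]; simp
  rw [← hcard]
  unfold R
  symm
  apply Nat.card_eq_of_bijective
    (fun σ : Equiv.Perm (Fin m) => (⟨(F_inv m σ).toPerm, F_good m σ⟩ :
      {f : Equiv.Perm (Fin (2 * (m + 1))) //
        IsDiagram (m + 1) f ∧ Crystallized (m + 1) f ∧ shortChords (m + 1) f = 1}))
  constructor
  · intro σ τ h
    have h : (F_inv m σ).toPerm = (F_inv m τ).toPerm := congrArg Subtype.val h
    ext i
    have h1 : F m σ ⟨i.val, by omega⟩ = F m τ ⟨i.val, by omega⟩ :=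
      DFunLike.congr_fun h (⟨i.val, by omega⟩ : Fin (2 * (m + 1)))
    have h1 := congrArg Fin.val h1
    rw [F_lt m σ _ i.isLt, F_lt m τ _ i.isLt] at h1
    simpa using h1
  · rintro ⟨f, hd, hc, hs⟩
    obtain ⟨hm, hl⟩ := structure_lem m f hd hc hs
    let g : Fin m → Fin m := fun i =>
      ⟨(f ⟨i.val, by omega⟩).val - (m + 2), by
        have := hl ⟨i.val, by omega⟩ i.isLt
        have := (f ⟨i.val, by omega⟩).isLt
        omega⟩
    have hgv : ∀ i : Fin m, (f ⟨i.val, by omega⟩).val = m + 2 + (g i).val := by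
      intro i
      have := hl ⟨i.val, by omega⟩ i.isLt
      simp only [g]
      omega
    have hg : Function.Injective g := by
      intro i j hij
      have h1 := hgv i
      have h2 := hgv j
      rw [hij] at h1
      have := f.injective (Fin.ext (by omega) : f ⟨i.val, by omega⟩ = f ⟨j.val, by omega⟩)
      exact Fin.ext (by simpa using this)
    let σ : Equiv.Perm (Fin m) := Equiv.ofBijective g (Finite.injective_iff_bijective.mp hg)
    have hσ : ∀ i, σ i = g i := fun i => rfl
    refine ⟨σ, Subtype.ext (Equiv.ext fun i => Fin.ext ?_)⟩
    change (F m σ i).val = (f i).val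
    rcases cases4 m i with h | h | h | ⟨j, h⟩
    · rw [F_lt m σ i h, hσ]
      exact (hgv ⟨i.val, h⟩).symm
    · rw [F_m m σ i h, hm i h]
    · rw [F_m1 m σ i h]
      have h1 := hm ⟨m, by omega⟩ rfl
      have : f ⟨m, by omega⟩ = i := Fin.ext (by omega)
      rw [← this, hd.1]
    · rw [F_gt m σ i j h]
      have h1 := hgv (σ.symm j)
      rw [← hσ, Equiv.apply_symm_apply] at h1
      have : f ⟨(σ.symm j).val, by omega⟩ = i := Fin.ext (by omega)
      rw [← this, hd.1]

end ChordBubbles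
end

section
/- For every n ≥ 2, the number of crystallized linear chord diagrams with n chords having exactly n − 1 short chords is R_{n,n−1} = n(n−1)/2, the (n−1)-th triangular number. -/
namespace ChordBubbles

/-- explicit matching -/
def gg (i j v : ℕ) : ℕ :=
  if v = 2 * i then 2 * j + 1 else if v = 2 * j + 1 then 2 * i else
  if 2 * i < v ∧ v < 2 * j + 1 then (if v % 2 = 1 then v + 1 else v - 1)
  else (if v % 2 = 0 then v + 1 else v - 1)

theorem gg_inv (i j v : ℕ) (h : i < j) : gg i j (gg i j v) = v := by
  unfold gg; split_ifs <;> omega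

theorem gg_lt (n i j v : ℕ) (h : i < j) (hj : j < n) (hv : v < 2 * n) : gg i j v < 2 * n := by
  unfold gg; split_ifs <;> omega

theorem gg_ne (i j v : ℕ) (h : i < j) : gg i j v ≠ v := by
  unfold gg; split_ifs <;> omega

theorem gg_short (i j v : ℕ) (h : i < j) :
    (gg i j v = v + 1 ∨ gg i j v + 1 = v) ↔ (v ≠ 2 * i ∧ v ≠ 2 * j + 1) := by
  unfold gg; split_ifs <;> omega

/-- the permutation -/
def FF (n i j : ℕ) (h : i < j) (hj : j < n) : Equiv.Perm (Fin (2 * n)) where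
  toFun v := ⟨gg i j v, gg_lt n i j v h hj v.2⟩
  invFun v := ⟨gg i j v, gg_lt n i j v h hj v.2⟩
  left_inv v := by ext; exact gg_inv i j v h
  right_inv v := by ext; exact gg_inv i j v h

theorem FF_val (n i j : ℕ) (h : i < j) (hj : j < n) (v : Fin (2 * n)) :
    (FF n i j h hj v).val = gg i j v := rfl

theorem FF_diag (n i j : ℕ) (h : i < j) (hj : j < n) : IsDiagram n (FF n i j h hj) := by
  refine ⟨fun v => (FF n i j h hj).left_inv v, fun v hv => gg_ne i j v h ?_⟩
  rw [← FF_val n i j h hj, hv]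

theorem FF_short (n i j : ℕ) (h : i < j) (hj : j < n) (v : Fin (2 * n)) :
    ShortEnd n (FF n i j h hj) v ↔ (v.val ≠ 2 * i ∧ v.val ≠ 2 * j + 1) := by
  unfold ShortEnd
  rw [FF_val]; exact gg_short i j v h

open Classical in
theorem count (n : ℕ) (f : Equiv.Perm (Fin (2 * n))) (hf : IsDiagram n f) :
    2 * shortChords n f + (Finset.univ.filter (fun i => ¬ ShortEnd n f i)).card = 2 * n := by
  have h1 : shortChords n f = (Finset.univ.filter (fun i => (f i).val = i.val + 1)).card := by
    unfold shortChords
    rw [Nat.card_eq_fintype_card, Fintype.card_subtype]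
  have h2 : (Finset.univ.filter (fun i => (f i).val + 1 = i.val)).card
      = (Finset.univ.filter (fun i => (f i).val = i.val + 1)).card := by
    refine Finset.card_bij' (fun i _ => f i) (fun i _ => f i) ?_ ?_ ?_ ?_
    · intro a ha; simp only [Finset.mem_filter, Finset.mem_univ, true_and] at ha ⊢
      rw [hf.1]; omega
    · intro a ha; simp only [Finset.mem_filter, Finset.mem_univ, true_and] at ha ⊢
      rw [hf.1]; omega
    · intro a _; exact hf.1 a
    · intro a _; exact hf.1 a
  have h3 : (Finset.univ.filter (fun i => ShortEnd n f i)).card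
      = (Finset.univ.filter (fun i => (f i).val = i.val + 1)).card
        + (Finset.univ.filter (fun i => (f i).val + 1 = i.val)).card := by
    rw [← Finset.card_union_of_disjoint]
    · congr 1; ext x
      simp only [Finset.mem_filter, Finset.mem_union, Finset.mem_univ, true_and]
      exact Iff.rfl
    · rw [Finset.disjoint_filter]
      intro x _ h; omega
  have h4 := Finset.card_filter_add_card_filter_not (s := (Finset.univ : Finset (Fin (2 * n))))
    (fun i => ShortEnd n f i)
  rw [Finset.card_univ, Fintype.card_fin] at h4
  omega

theorem FF_mem (n i j : ℕ) (h : i < j) (hj : j < n) :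
    IsDiagram n (FF n i j h hj) ∧ Crystallized n (FF n i j h hj) ∧
      shortChords n (FF n i j h hj) = n - 1 := by
  classical
  refine ⟨FF_diag n i j h hj, ?_, ?_⟩
  · intro a b hb v hav hvb hc
    obtain ⟨_, hb2, hns, -, -⟩ := hb
    have h1 := hns v hav hvb
    rw [FF_short] at h1
    have h3 := hns ⟨2 * i + 1, by omega⟩
    rw [FF_short] at h3
    rw [FF_val] at hc
    have hg1 : gg i j (2 * i) = 2 * j + 1 := by simp [gg]
    have hg2 : gg i j (2 * j + 1) = 2 * i := by unfold gg; split_ifs <;> omega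
    have : v.val = 2 * i ∨ v.val = 2 * j + 1 := by omega
    simp only at h3
    rcases this with e | e
    · rw [e, hg1] at hc; rw [e] at hav hvb
      exact h3 (by omega) (by omega) (by omega)
    · rw [e, hg2] at hc; rw [e] at hav hvb
      exact h3 (by omega) (by omega) (by omega)
  · have hc := count n _ (FF_diag n i j h hj)
    have : (Finset.univ.filter (fun v => ¬ ShortEnd n (FF n i j h hj) v))
        = {(⟨2 * i, by omega⟩ : Fin (2 * n)), ⟨2 * j + 1, by omega⟩} := by
      ext v
      simp only [FF_short, Finset.mem_filter, Finset.mem_univ, true_and, Finset.mem_insert,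
        Finset.mem_singleton, Fin.ext_iff]
      omega
    rw [this, Finset.card_pair (by simp only [ne_eq, Fin.mk.injEq]; omega)] at hc
    omega

theorem struct (n p q : ℕ) (h : ℕ → ℕ) (hpq : p < q) (hq : q < 2 * n)
    (hinv : ∀ v, v < 2 * n → h (h v) = v)
    (hp : h p = q) (hqp : h q = p) (hne : q ≠ p + 1)
    (hs : ∀ v, v < 2 * n → v ≠ p → v ≠ q → h v = v + 1 ∨ h v + 1 = v) :
    ∀ v, v < 2 * n → (v < p → (v % 2 = 0 → h v = v + 1) ∧ (v % 2 = 1 → h v + 1 = v)) ∧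
      (v = p → v % 2 = 0) ∧
      (p < v → v < q → (v % 2 = 1 → h v = v + 1) ∧ (v % 2 = 0 → h v + 1 = v)) ∧
      (v = q → v % 2 = 1) ∧
      (q < v → (v % 2 = 0 → h v = v + 1) ∧ (v % 2 = 1 → h v + 1 = v)) := by
  intro v
  induction v with
  | zero =>
    intro hv
    have := hs 0 hv
    omega
  | succ v ih =>
    intro hv
    have ih := ih (by omega)
    have h1 := hs (v + 1) hv
    have h2 := hinv v (by omega)
    have h3 := hinv (v + 1) hv
    have h4 : h v = v + 1 → h (v + 1) = v := fun e => by rw [e] at h2; exact h2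
    have h5 : h (v + 1) + 1 = v + 1 → h v = v + 1 := fun e => by
      have : h (v + 1) = v := by omega
      rw [this] at h3; exact h3
    have h6 : v = p → h v = q := fun e => by rw [e, hp]
    have h7 : v = q → h v = p := fun e => by rw [e, hqp]
    have h8 : v + 1 = p → h (v + 1) = q := fun e => by rw [e, hp]
    have h9 : v + 1 = q → h (v + 1) = p := fun e => by rw [e, hqp]
    clear hs hinv h2 h3
    obtain ⟨i1, i2, i3, i4, i5⟩ := ih
    generalize h (v + 1) = b at *
    generalize h v = a at *
    refine ⟨?_, ?_, ?_, ?_, ?_⟩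
    · intro c
      have := i1 (by omega)
      have := h1 (by omega) (by omega)
      clear i1 i2 i3 i4 i5 h1 h6 h7 h8 h9
      omega
    · intro c
      have := i1 (by omega)
      have := h8 c
      clear i1 i2 i3 i4 i5 h1 h6 h7 h8 h9
      omega
    · intro c d
      have := h1 (by omega) (by omega)
      rcases Nat.lt_or_ge p v with e | e
      · have := i3 e (by omega)
        clear i1 i2 i3 i4 i5 h1 h6 h7 h8 h9
        omega
      · have := i2 (by omega)
        have := h6 (by omega)
        clear i1 i2 i3 i4 i5 h1 h6 h7 h8 h9
        omega
    · intro c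
      have := i3 (by omega) (by omega)
      have := h9 c
      clear i1 i2 i3 i4 i5 h1 h6 h7 h8 h9
      omega
    · intro c
      have := h1 (by omega) (by omega)
      rcases Nat.lt_or_ge q v with e | e
      · have := i5 e
        clear i1 i2 i3 i4 i5 h1 h6 h7 h8 h9
        omega
      · have := i4 (by omega)
        have := h7 (by omega)
        clear i1 i2 i3 i4 i5 h1 h6 h7 h8 h9
        omega

theorem FF_surj (n : ℕ) (hn : 2 ≤ n) (f : Equiv.Perm (Fin (2 * n))) (hf : IsDiagram n f)
    (hk : shortChords n f = n - 1) : ∃ i j, ∃ (h : i < j) (hj : j < n), FF n i j h hj = f := by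
  classical
  have hc := count n f hf
  rw [hk] at hc
  have hc2 : (Finset.univ.filter (fun i => ¬ ShortEnd n f i)).card = 2 := by omega
  obtain ⟨x, y, hxy, hS⟩ := Finset.card_eq_two.1 hc2
  have key : ∀ v, ¬ ShortEnd n f v ↔ v = x ∨ v = y := by
    intro v
    have : v ∈ (Finset.univ.filter (fun i => ¬ ShortEnd n f i)) ↔ v ∈ ({x, y} : Finset _) := by
      rw [hS]
    simpa using this
  clear hS hc2 hc
  wlog hlt : x < y generalizing x y
  · exact this y x hxy.symm (fun v => by rw [key v]; tauto)
      (lt_of_le_of_ne (not_lt.1 hlt) hxy.symm)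
  have hnx : ¬ ShortEnd n f x := (key x).2 (Or.inl rfl)
  have hfx : f x = y := by
    have : ¬ ShortEnd n f (f x) := by
      unfold ShortEnd at hnx ⊢
      rw [hf.1]; omega
    rcases (key _).1 this with e | e
    · exact absurd e (hf.2 x)
    · exact e
  have hfy : f y = x := by rw [← hfx, hf.1]
  let h : ℕ → ℕ := fun v => if hv : v < 2 * n then (f ⟨v, hv⟩).val else 0
  have hval : ∀ v : Fin (2 * n), h v.val = (f v).val := fun v => by simp [h]
  have hst := struct n x.val y.val h hlt y.2
    (fun v hv => by
      have := hval ⟨v, hv⟩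
      simp only at this
      rw [this, hval, hf.1])
    (by rw [hval, hfx]) (by rw [hval, hfy])
    (by
      unfold ShortEnd at hnx
      rw [hfx] at hnx; omega)
    (fun v hv h1 h2 => by
      have h3 : ShortEnd n f ⟨v, hv⟩ := by
        by_contra h4
        rcases (key _).1 h4 with e | e
        · exact h1 (by rw [← e])
        · exact h2 (by rw [← e])
      have := hval ⟨v, hv⟩
      simp only at this
      rw [this]; exact h3)
  have hx0 := (hst x x.2).2.1 rfl
  have hy1 := (hst y y.2).2.2.2.1 rfl
  have hlt' : x.val < y.val := hlt
  have hyl := y.2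
  have hne : y.val ≠ x.val + 1 := by
    unfold ShortEnd at hnx
    rw [hfx] at hnx; omega
  refine ⟨x.val / 2, y.val / 2, by omega, by omega, ?_⟩
  ext v
  rw [FF_val]
  have e1 : 2 * (x.val / 2) = x.val := by omega
  have e2 : 2 * (y.val / 2) + 1 = y.val := by omega
  have hv := hst v v.2
  rw [hval] at hv
  have h6 : v.val = x.val → (f v).val = y.val := fun e => by rw [Fin.ext e, hfx]
  have h7 : v.val = y.val → (f v).val = x.val := fun e => by rw [Fin.ext e, hfy]
  unfold gg
  rw [e1, e2]
  split_ifs <;> omega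

/-- parametrization -/
def param (n : ℕ) (s : (j : Fin n) × Fin j.val) : {f : Equiv.Perm (Fin (2 * n)) //
    IsDiagram n f ∧ Crystallized n f ∧ shortChords n f = n - 1} :=
  ⟨FF n s.2.val s.1.val s.2.2 s.1.2, FF_mem n _ _ _ _⟩

theorem param_bij (n : ℕ) (hn : 2 ≤ n) : Function.Bijective (param n) := by
  constructor
  · rintro ⟨⟨j, hj⟩, ⟨i, hi⟩⟩ ⟨⟨j', hj'⟩, ⟨i', hi'⟩⟩ he
    simp only at hi hi'
    have he := congrArg Subtype.val he
    simp only [param] at he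
    have H : ∀ v : Fin (2 * n), (v.val ≠ 2 * i ∧ v.val ≠ 2 * j + 1) ↔
        (v.val ≠ 2 * i' ∧ v.val ≠ 2 * j' + 1) := fun v => by
      rw [← FF_short n i j hi hj, ← FF_short n i' j' hi' hj', he]
    have H1 := H ⟨2 * i, by omega⟩
    have H2 := H ⟨2 * j + 1, by omega⟩
    simp only at H1 H2
    obtain rfl : i = i' := by omega
    obtain rfl : j = j' := by omega
    rfl
  · rintro ⟨f, hf, _, hk⟩
    obtain ⟨i, j, h, hj, e⟩ := FF_surj n hn f hf hk
    exact ⟨⟨⟨j, hj⟩, ⟨i, h⟩⟩, Subtype.ext e⟩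

/-- The number of crystallized diagrams with `n` chords and exactly `n-1` short chords is the
`(n-1)`-st triangular number `n(n-1)/2`. -/
theorem R_n_pred (n : ℕ) (hn : 2 ≤ n) : R n (n - 1) = n * (n - 1) / 2 := by
  unfold R
  rw [← Nat.card_congr (Equiv.ofBijective _ (param_bij n hn)), Nat.card_eq_fintype_card,
    Fintype.card_sigma]
  simp only [Fintype.card_fin]
  rw [Fin.sum_univ_eq_sum_range (fun i => i), Finset.sum_range_id]

end ChordBubbles
end

section
/- For all integers n ≥ k ≥ 1, the number of crystallized linear chord diagrams with n chords, exactly k of which are short, is R_{n,k} = Σ (w_1! · w_2! ⋯ w_{k+1}!) / (p_1! · p_2! ⋯ p_E!), where E = k(k+1)/2, the sum ranges over all tuples (p_1,…,p_E) of nonnegative integers with p_1 + ⋯ + p_E = n − k, and w = B·p, i.e., w_j = Σ_{i : edge i of K_{k+1} is incident to vertex j} p_i for each vertex j of K_{k+1}. -/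
namespace ChordBubbles

/-- The edge set of the complete graph on `m` vertices. -/
def Edge (m : ℕ) := {e : Sym2 (Fin m) // ¬ e.IsDiag}

instance (m : ℕ) : Fintype (Edge m) := Subtype.fintype _
instance (m : ℕ) : DecidableEq (Edge m) := Subtype.instDecidableEq

/-- `wvec p j` : the entry of `w = B p` at the vertex `j`, where `B` is the incidence matrix of
the complete graph; i.e., the sum of `p` over the edges incident to `j`. -/
def wvec {m : ℕ} (p : Edge m → ℕ) (j : Fin m) : ℕ :=
  ∑ e : Edge m, if j ∈ e.val then p e else 0

open Finset in
theorem card_colored {α β ι : Type} [Fintype α] [Fintype β] [Fintype ι] [DecidableEq ι]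
    (a : α → ι) (b : β → ι)
    (h : ∀ i, Nat.card {x // a x = i} = Nat.card {y // b y = i}) :
    Nonempty {φ : α ≃ β // ∀ x, b (φ x) = a x} ∧
    Nat.card {φ : α ≃ β // ∀ x, b (φ x) = a x} =
      ∏ i, Nat.factorial (Nat.card {x // a x = i}) := by
  classical
  have hφ : ∃ φ : α ≃ β, ∀ x, b (φ x) = a x := by
    exact ⟨Equiv.ofFiberEquiv (f := a) (g := b) fun i => (Finite.card_eq.1 (h i)).some,
      fun x => Equiv.ofFiberEquiv_map _ x⟩
  obtain ⟨φ, hφ⟩ := hφ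
  refine ⟨⟨φ, hφ⟩, ?_⟩
  have e : {φ : α ≃ β // ∀ x, b (φ x) = a x} ≃ {g : Equiv.Perm α // a ∘ g = a} :=
    { toFun := fun ψ => ⟨ψ.1.trans φ.symm, by
        funext x
        have := hφ (φ.symm (ψ.1 x))
        simp only [Equiv.apply_symm_apply] at this
        simp [← this, ψ.2]⟩
      invFun := fun g => ⟨g.1.trans φ, fun x => by
        have := congrFun g.2 x
        simpa [hφ] using this⟩
      left_inv := fun ψ => by ext x; simp
      right_inv := fun g => by ext x; simp }
  rw [Nat.card_congr e, Nat.card_eq_fintype_card, DomMulAct.stabilizer_card]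
  simp [Nat.card_eq_fintype_card]

theorem Edge.inf_lt_sup {m : ℕ} (e : Edge m) : e.val.inf < e.val.sup := by
  obtain ⟨e, he⟩ := e
  induction e using Sym2.ind with
  | _ x y =>
    simp at he ⊢
    exact Ne.symm he

theorem Edge.mem_iff {m : ℕ} (e : Edge m) (j : Fin m) : j ∈ e.val ↔ j = e.val.inf ∨ j = e.val.sup := by
  obtain ⟨e, he⟩ := e
  induction e using Sym2.ind with
  | _ x y =>
    simp
    rcases le_total x y with h | h <;> simp [h] <;> tauto

def colH {m : ℕ} (p : Edge m → ℕ) (h : (Σ e : Edge m, Fin (p e)) × Bool) : Fin m :=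
  if h.2 then h.1.1.val.sup else h.1.1.val.inf

theorem card_colH {m : ℕ} (p : Edge m → ℕ) (j : Fin m) :
    Nat.card {h // colH p h = j} = wvec p j := by
  classical
  rw [Nat.card_eq_fintype_card, Fintype.card_subtype, Finset.card_filter, Fintype.sum_prod_type,
    Fintype.sum_sigma]
  unfold wvec
  refine Finset.sum_congr rfl fun e _ => ?_
  have := e.inf_lt_sup
  have h2 := e.mem_iff j
  simp only [colH, Fintype.sum_bool, if_true, Finset.sum_const, Finset.card_univ, Fintype.card_fin]
  by_cases h1 : e.val.sup = j
  · have h3 : e.val.inf ≠ j := by rintro rfl; exact absurd h1 this.ne'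
    simp [h1, h3, h2.2 (Or.inr h1.symm)]
  · by_cases h3 : e.val.inf = j
    · simp [h1, h3, h2.2 (Or.inl h3.symm)]
    · have : ¬ j ∈ e.val := by rw [h2]; push Not; exact ⟨Ne.symm h3, Ne.symm h1⟩
      simp [h1, h3, this]

section abs
variable {m : ℕ} {V : Type} (c : V → Fin m)

/-- colour-changing involutions -/
def Good (g : V → V) : Prop := (∀ x, g (g x) = x) ∧ ∀ x, c (g x) ≠ c x

abbrev LowV (g : V → V) := {x : V // c x < c (g x)}

def edgeOf (g : V → V) (x : LowV c g) : Edge m :=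
  ⟨s(c x.1, c (g x.1)), by simpa using x.2.ne⟩

noncomputable def typ (g : V → V) (e : Edge m) : ℕ := Nat.card {x // edgeOf c g x = e}

theorem edgeOf_inf (g : V → V) (x : LowV c g) : (edgeOf c g x).val.inf = c x.1 := by
  simp [edgeOf, x.2.le]
theorem edgeOf_sup (g : V → V) (x : LowV c g) : (edgeOf c g x).val.sup = c (g x.1) := by
  simp [edgeOf, x.2.le]

def fiberEquiv (p : Edge m → ℕ) (g : V → V) (hg : Good c g) :
    {φ : (Σ e : Edge m, Fin (p e)) × Bool ≃ V // (∀ h, c (φ h) = colH p h) ∧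
        ∀ h, φ (h.1, !h.2) = g (φ h)} ≃
    {ψ : (Σ e : Edge m, Fin (p e)) ≃ LowV c g // ∀ d, edgeOf c g (ψ d) = d.1} where
  toFun φ := 
    have key : ∀ d, c (φ.1 (d, false)) = d.1.val.inf ∧ c (g (φ.1 (d, false))) = d.1.val.sup := by
      intro d
      rw [← φ.2.2, φ.2.1, φ.2.1]; simp [colH]
    have key2 : ∀ x : LowV c g, (φ.1.symm x.1).2 = false := by
      intro x
      by_contra hb
      have hb : (φ.1.symm x.1).2 = true := by simpa using hb
      have h1 := φ.2.1 (φ.1.symm x.1)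
      have h2 := φ.2.2 (φ.1.symm x.1)
      have h3 := φ.2.1 ((φ.1.symm x.1).1, false)
      have h4 := x.2
      have h5 := (φ.1.symm x.1).1.1.inf_lt_sup
      rw [hb] at h2
      simp [colH, hb] at h1 h2 h3
      rw [← h2, h3, h1] at h4
      exact absurd h4 (not_lt.2 h5.le)
    ⟨{ toFun := fun d => ⟨φ.1 (d, false), by rw [(key d).1, (key d).2]; exact d.1.inf_lt_sup⟩
       invFun := fun x => (φ.1.symm x.1).1
       left_inv := fun d => by simp
       right_inv := fun x => by
         apply Subtype.ext
         have : ((φ.1.symm x.1).1, false) = φ.1.symm x.1 := by rw [← key2 x]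
         simp only [this, Equiv.apply_symm_apply] }, by
      intro d
      apply Subtype.ext
      have : d.1.val = s(d.1.val.inf, d.1.val.sup) := by
        obtain ⟨⟨e, he⟩, t⟩ := d
        induction e using Sym2.ind with
        | _ x y => rcases le_total x y with h | h <;> simp [h]
      rw [this]
      simp [edgeOf, (key d).1, (key d).2]⟩
  invFun ψ := 
    have nlow : ∀ x, ¬ c x < c (g x) → c (g x) < c (g (g x)) := by
      intro x hx
      rw [hg.1]
      exact lt_of_le_of_ne (not_lt.1 hx) (hg.2 x)
    ⟨{ toFun := fun h => if h.2 then g (ψ.1 h.1).1 else (ψ.1 h.1).1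
       invFun := fun x => if hx : c x < c (g x) then (ψ.1.symm ⟨x, hx⟩, false)
          else (ψ.1.symm ⟨g x, nlow x hx⟩, true)
       left_inv := by
         rintro ⟨d, b⟩
         have h1 := (ψ.1 d).2
         cases b
         · simp only [Bool.false_eq_true, if_false]
           rw [dif_pos h1]
           simp
         · simp only [if_true]
           rw [dif_neg (by rw [hg.1]; exact not_lt.2 h1.le)]
           simp [hg.1]
       right_inv := by
         intro x
         by_cases hx : c x < c (g x)
         · simp [hx]
         · simp [hx, hg.1] }, by
      constructor
      · rintro ⟨d, b⟩
        have h1 := edgeOf_inf c g (ψ.1 d)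
        have h2 := edgeOf_sup c g (ψ.1 d)
        rw [ψ.2] at h1 h2
        cases b <;> simp [colH, h1, h2]
      · rintro ⟨d, b⟩
        cases b <;> simp [hg.1]⟩
  left_inv φ := by
    apply Subtype.ext
    ext ⟨d, b⟩
    cases b
    · simp
    · simp [← φ.2.2]
  right_inv ψ := by
    apply Subtype.ext
    ext d
    simp

theorem low_colored [Fintype V] (p : Edge m → ℕ) (g : V → V) (hp : typ c g = p) :
    Nonempty {ψ : (Σ e : Edge m, Fin (p e)) ≃ LowV c g // ∀ d, edgeOf c g (ψ d) = d.1} ∧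
    Nat.card {ψ : (Σ e : Edge m, Fin (p e)) ≃ LowV c g // ∀ d, edgeOf c g (ψ d) = d.1} =
      ∏ e, Nat.factorial (p e) := by
  have h0 : ∀ e, Nat.card {x : (Σ e : Edge m, Fin (p e)) // x.1 = e} = p e := by
    intro e
    rw [Nat.card_congr (Equiv.sigmaSubtype e)]
    simp
  have := card_colored (fun d : (Σ e : Edge m, Fin (p e)) => d.1) (edgeOf c g) (by
    intro e
    rw [h0, ← hp]; rfl)
  simpa only [h0] using this

theorem good_card [Fintype V] (p : Edge m → ℕ) (g : V → V) (hg : Good c g) (hp : typ c g = p) :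
    (∀ j, Nat.card {x // c x = j} = wvec p j) ∧ Nat.card V = 2 * ∑ e, p e := by
  obtain ⟨⟨ψ⟩, -⟩ := low_colored c p g hp
  obtain ⟨φ, h1, h2⟩ := (fiberEquiv c p g hg).symm ψ
  constructor
  · intro j
    rw [← card_colH]
    exact (Nat.card_congr (φ.subtypeEquiv (fun h => by rw [h1]))).symm
  · rw [← Nat.card_congr φ]
    simp [Nat.card_eq_fintype_card, mul_comm]

theorem abs_count [Fintype V] (p : Edge m → ℕ) (h : ∀ j, Nat.card {x // c x = j} = wvec p j) :
    Nat.card {g : V → V // Good c g ∧ typ c g = p} * ∏ e, Nat.factorial (p e) =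
      ∏ j, Nat.factorial (wvec p j) := by
  classical
  have h1 := (card_colored (colH p) c (fun j => by rw [card_colH, h])).2
  simp only [card_colH] at h1
  rw [← h1]
  have hgood : ∀ φ : (Σ e : Edge m, Fin (p e)) × Bool ≃ V, (∀ h, c (φ h) = colH p h) →
      ∀ g : V → V, (∀ h, φ (h.1, !h.2) = g (φ h)) → Good c g ∧ typ c g = p := by
    intro φ hφ g hφg
    have hg : Good c g := by
      constructor
      · intro x
        obtain ⟨y, rfl⟩ := φ.surjective x
        rw [← hφg, ← hφg]; simp
      · intro x
        obtain ⟨⟨d, b⟩, rfl⟩ := φ.surjective x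
        rw [← hφg, hφ, hφ]
        have := d.1.inf_lt_sup
        cases b <;> simp [colH, this.ne, this.ne']
    refine ⟨hg, ?_⟩
    obtain ⟨ψ, hψ⟩ := fiberEquiv c p g hg ⟨φ, hφ, hφg⟩
    funext e
    have h0 : Nat.card {x : (Σ e : Edge m, Fin (p e)) // x.1 = e} = p e := by
      rw [Nat.card_congr (Equiv.sigmaSubtype e)]
      simp
    rw [← h0]
    exact (Nat.card_congr (ψ.subtypeEquiv (fun h => by rw [hψ]))).symm
  let E : {φ : (Σ e : Edge m, Fin (p e)) × Bool ≃ V // ∀ h, c (φ h) = colH p h} ≃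
      Σ g : {g : V → V // Good c g ∧ typ c g = p},
       {φ : (Σ e : Edge m, Fin (p e)) × Bool ≃ V // (∀ h, c (φ h) = colH p h) ∧
        ∀ h, φ (h.1, !h.2) = g.1 (φ h)} :=
    { toFun := fun φ => ⟨⟨fun x => φ.1 ((φ.1.symm x).1, !(φ.1.symm x).2),
          hgood φ.1 φ.2 _ (by intro h; simp)⟩, ⟨φ.1, φ.2, by intro h; simp⟩⟩
      invFun := fun x => ⟨x.2.1, x.2.2.1⟩
      left_inv := fun φ => rfl
      right_inv := by
        rintro ⟨⟨g, hg⟩, ⟨φ, h1, h2⟩⟩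
        have : g = fun x => φ ((φ.symm x).1, !(φ.symm x).2) := by
          funext x
          rw [h2]; simp
        subst this
        rfl }
  rw [Nat.card_congr E, Nat.card_sigma]
  rw [Finset.sum_congr rfl (g := fun _ => ∏ e, Nat.factorial (p e))]
  · simp [Nat.card_eq_fintype_card]
  · intro g _
    rw [Nat.card_congr (fiberEquiv c p g.1 g.2.1), (low_colored c p g.1 g.2.2).2]

end abs

def Valid (n k : ℕ) (S : Finset ℕ) : Prop := S.card = k ∧ ∀ s ∈ S, s + 1 < 2 * n ∧ s + 1 ∉ S

def NS (S : Finset ℕ) (x : ℕ) : Prop := x ∉ S ∧ ∀ s ∈ S, s + 1 ≠ x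

abbrev VS (n : ℕ) (S : Finset ℕ) := {x : Fin (2 * n) // NS S x.val}

def rk (S : Finset ℕ) (x : ℕ) : ℕ := (S.filter (· < x)).card

theorem rk_mono (S : Finset ℕ) {x y : ℕ} (h : x ≤ y) : rk S x ≤ rk S y :=
  Finset.card_le_card fun s hs => by simp at hs ⊢; exact ⟨hs.1, by omega⟩

theorem rk_lt (S : Finset ℕ) {x y s : ℕ} (hs : s ∈ S) (h : x ≤ s) (h2 : s < y) : rk S x < rk S y :=
  Finset.card_lt_card (by
    rw [Finset.ssubset_iff_of_subset]
    · exact ⟨s, by simp [hs, h2], by simp [h]⟩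
    · intro t ht; simp at ht ⊢; exact ⟨ht.1, by omega⟩)

theorem rk_eq (S : Finset ℕ) {x y : ℕ} (h : x ≤ y) (h2 : ∀ s ∈ S, x ≤ s → y ≤ s) :
    rk S x = rk S y := by
  unfold rk
  congr 1
  ext s
  simp only [Finset.mem_filter]
  constructor
  · rintro ⟨a, b⟩; exact ⟨a, by omega⟩
  · rintro ⟨a, b⟩
    refine ⟨a, ?_⟩
    by_contra hc
    have := h2 s a (by omega)
    omega

def col {n k : ℕ} {S : Finset ℕ} (hS : Valid n k S) (x : VS n S) : Fin (k + 1) :=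
  ⟨rk S x.1.val, by
    have := Finset.card_filter_le S (· < x.1.val)
    have h := hS.1
    unfold rk
    omega⟩

theorem col_eq {n k : ℕ} {S : Finset ℕ} (hS : Valid n k S) (x y : VS n S) :
    col hS x = col hS y ↔ rk S x.1.val = rk S y.1.val := by
  simp [col]

def shortSet {n : ℕ} (f : Equiv.Perm (Fin (2 * n))) : Finset ℕ :=
  (Finset.univ.filter (fun i => (f i).val = i.val + 1)).map Fin.valEmbedding

theorem mem_shortSet {n : ℕ} (f : Equiv.Perm (Fin (2 * n))) (i : Fin (2 * n)) :
    i.val ∈ shortSet f ↔ (f i).val = i.val + 1 := by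
  simp [shortSet, ← Fin.ext_iff]

theorem lt_of_mem_shortSet {n : ℕ} (f : Equiv.Perm (Fin (2 * n))) {s : ℕ} (h : s ∈ shortSet f) :
    s < 2 * n := by
  simp [shortSet] at h
  obtain ⟨i, -, rfl⟩ := h
  exact i.2

theorem valid_shortSet {n k : ℕ} (f : Equiv.Perm (Fin (2 * n))) (hf : IsDiagram n f)
    (hk : shortChords n f = k) : Valid n k (shortSet f) := by
  constructor
  · rw [← hk, shortChords, shortSet, Finset.card_map, Nat.card_eq_fintype_card,
      Fintype.card_subtype]
  · intro s hs
    have hlt := lt_of_mem_shortSet f hs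
    have h1 := (mem_shortSet f ⟨s, hlt⟩).1 hs
    simp only at h1
    have h2 := (f ⟨s, hlt⟩).2
    refine ⟨by omega, fun h => ?_⟩
    have h3 := (mem_shortSet f (f ⟨s, hlt⟩)).1 (by rw [h1]; exact h)
    rw [hf.1] at h3
    simp at h3
    omega

theorem ns_shortSet {n : ℕ} (f : Equiv.Perm (Fin (2 * n))) (hf : IsDiagram n f)
    (i : Fin (2 * n)) : NS (shortSet f) i.val ↔ ¬ ShortEnd n f i := by
  unfold NS ShortEnd
  rw [mem_shortSet, not_or]
  refine and_congr_right fun _ => ?_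
  constructor
  · intro h h2
    refine h (f i).val ?_ h2
    rw [mem_shortSet, hf.1, h2]
  · rintro h s hs rfl'
    have hlt := lt_of_mem_shortSet f hs
    have h1 := (mem_shortSet f ⟨s, hlt⟩).1 hs
    have : f ⟨s, hlt⟩ = i := by ext; simpa [rfl'] using h1
    apply h
    rw [← this, hf.1, this]
    exact rfl'

theorem ns_map {n : ℕ} (f : Equiv.Perm (Fin (2 * n))) (hf : IsDiagram n f)
    (i : Fin (2 * n)) (h : NS (shortSet f) i.val) : NS (shortSet f) (f i).val := by
  rw [ns_shortSet f hf] at h ⊢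
  unfold ShortEnd at h ⊢
  rw [hf.1]
  omega

theorem exists_bubble {n : ℕ} (f : Equiv.Perm (Fin (2 * n))) (x y : Fin (2 * n)) (hxy : x ≤ y)
    (h : ∀ i, x ≤ i → i ≤ y → ¬ ShortEnd n f i) :
    ∃ a b, IsBubble n f a b ∧ a ≤ x.val ∧ y.val ≤ b := by
  classical
  have hA : ∃ a, a ≤ x.val ∧ ∀ i : Fin (2 * n), a ≤ i.val → i ≤ y → ¬ ShortEnd n f i :=
    ⟨x.val, le_rfl, h⟩
  obtain ⟨a, ⟨ha1, ha2⟩, ha3⟩ : ∃ a, (a ≤ x.val ∧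
      ∀ i : Fin (2 * n), a ≤ i.val → i ≤ y → ¬ ShortEnd n f i) ∧ ∀ a' < a, ¬ (a' ≤ x.val ∧
      ∀ i : Fin (2 * n), a' ≤ i.val → i ≤ y → ¬ ShortEnd n f i) :=
    ⟨Nat.find hA, Nat.find_spec hA, fun a' => Nat.find_min hA⟩
  have hB : ∃ d, y.val ≤ 2 * n - 1 - d ∧ d < 2 * n ∧
      ∀ i : Fin (2 * n), a ≤ i.val → i.val ≤ 2 * n - 1 - d → ¬ ShortEnd n f i :=
    ⟨2 * n - 1 - y.val, by omega, by omega, fun i h1 h2 => ha2 i h1 (by rw [Fin.le_def]; omega)⟩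
  obtain ⟨d, ⟨hd1, hd2, hd3⟩, hd4⟩ : ∃ d, (y.val ≤ 2 * n - 1 - d ∧ d < 2 * n ∧
      ∀ i : Fin (2 * n), a ≤ i.val → i.val ≤ 2 * n - 1 - d → ¬ ShortEnd n f i) ∧
      ∀ d' < d, ¬ (y.val ≤ 2 * n - 1 - d' ∧ d' < 2 * n ∧
      ∀ i : Fin (2 * n), a ≤ i.val → i.val ≤ 2 * n - 1 - d' → ¬ ShortEnd n f i) :=
    ⟨Nat.find hB, Nat.find_spec hB, fun a' => Nat.find_min hB⟩
  have hxy' : x.val ≤ y.val := hxy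
  refine ⟨a, 2 * n - 1 - d, ⟨by omega, by omega, hd3, ?_, ?_⟩, ha1, hd1⟩
  · by_cases h0 : a = 0
    · exact Or.inl h0
    · right
      have := ha3 (a - 1) (by omega)
      push Not at this
      obtain ⟨i, h1, h2, h3⟩ := this (by omega)
      refine ⟨i, ?_, h3⟩
      by_contra hc
      exact ha2 i (by omega) h2 h3
  · by_cases h0 : d = 0
    · left; omega
    · right
      have := hd4 (d - 1) (by omega)
      push Not at this
      obtain ⟨i, h1, h2, h3⟩ := this (by omega) (by omega)
      refine ⟨i, ?_, h3⟩
      by_contra hc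
      have hi : i.val ≤ 2 * n - 1 - d := by
        clear hd4 ha3 hB hA this
        omega
      exact hd3 i h1 hi h3

theorem no_short_between {n : ℕ} (f : Equiv.Perm (Fin (2 * n))) (hf : IsDiagram n f)
    (x y : Fin (2 * n)) (_ : x ≤ y) (hx : NS (shortSet f) x.val) (hy : NS (shortSet f) y.val)
    (h : rk (shortSet f) x.val = rk (shortSet f) y.val) (i : Fin (2 * n)) (h1 : x ≤ i)
    (h2 : i ≤ y) : ¬ ShortEnd n f i := by
  rw [← ns_shortSet f hf]
  rw [Fin.le_def] at *
  have key : ∀ s ∈ shortSet f, x.val ≤ s → s < y.val → False := by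
    intro s hs a b
    have := rk_lt _ hs a b
    omega
  constructor
  · intro hs
    by_cases he : i.val = y.val
    · rw [he] at hs; exact hy.1 hs
    · exact key _ hs h1 (by omega)
  · intro s hs he
    by_cases hc : s + 1 = x.val
    · exact hx.2 s hs hc
    · exact key s hs (by omega) (by omega)

theorem cryst_iff {n : ℕ} (f : Equiv.Perm (Fin (2 * n))) (hf : IsDiagram n f) :
    Crystallized n f ↔ ∀ x : Fin (2 * n), NS (shortSet f) x.val →
      rk (shortSet f) (f x).val ≠ rk (shortSet f) x.val := by
  constructor
  · intro hc x hx he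
    have hfx := ns_map f hf x hx
    rcases le_total x (f x) with h | h
    · obtain ⟨a, b, hb, h1, h2⟩ := exists_bubble f x (f x) h
        (no_short_between f hf x (f x) h hx hfx he.symm)
      rw [Fin.le_def] at h
      exact hc a b hb x h1 (by omega) ⟨by omega, h2⟩
    · obtain ⟨a, b, hb, h1, h2⟩ := exists_bubble f (f x) x h
        (no_short_between f hf (f x) x h hfx hx he)
      rw [Fin.le_def] at h
      exact hc a b hb x (by omega) h2 ⟨by omega, by omega⟩
  · intro h a b hb i h1 h2 ⟨h3, h4⟩
    have hns := hb.2.2.1 i h1 h2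
    refine h i ((ns_shortSet f hf i).2 hns) ?_
    have key : ∀ s ∈ shortSet f, a ≤ s → s ≤ b → False := by
      intro s hs ha hb'
      have hlt := lt_of_mem_shortSet f hs
      exact hb.2.2.1 ⟨s, hlt⟩ ha hb' (Or.inl ((mem_shortSet f ⟨s, hlt⟩).1 hs))
    rcases le_total i.val (f i).val with hle | hle
    · refine (rk_eq _ hle fun s hs h5 => ?_).symm
      by_contra hc
      exact key s hs (by omega) (by omega)
    · refine (rk_eq _ hle fun s hs h5 => ?_)
      by_contra hc
      exact key s hs (by omega) (by omega)

section ext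
variable {n k : ℕ} {S : Finset ℕ} (hS : Valid n k S)

def extF (g : VS n S → VS n S) (x : Fin (2 * n)) : Fin (2 * n) :=
  if h : x.val ∈ S then ⟨x.val + 1, (hS.2 _ h).1⟩
  else if h2 : x.val - 1 ∈ S ∧ 0 < x.val then ⟨x.val - 1, by omega⟩
  else (g ⟨x, h, fun s hs he => h2 ⟨by rw [← he]; simpa using hs, by omega⟩⟩).1

theorem extF_left (g : VS n S → VS n S) (x : Fin (2 * n)) (h : x.val ∈ S) :
    (extF hS g x).val = x.val + 1 := by
  unfold extF; rw [dif_pos h]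

theorem extF_right (g : VS n S → VS n S) (x : Fin (2 * n)) (s : ℕ) (h : s ∈ S)
    (he : s + 1 = x.val) : (extF hS g x).val = s := by
  unfold extF
  rw [dif_neg (by rw [← he]; exact (hS.2 s h).2), dif_pos ⟨by rw [← he]; simpa using h, by omega⟩]
  simp only; omega

theorem extF_ns (g : VS n S → VS n S) (x : Fin (2 * n)) (h : NS S x.val) :
    extF hS g x = (g ⟨x, h⟩).1 := by
  unfold extF
  rw [dif_neg h.1, dif_neg]
  rintro ⟨h1, h2⟩
  exact h.2 _ h1 (by omega)

theorem tri (x : ℕ) : x ∈ S ∨ (∃ s ∈ S, s + 1 = x) ∨ NS S x := by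
  unfold NS
  by_cases h : x ∈ S
  · exact Or.inl h
  · by_cases h2 : ∃ s ∈ S, s + 1 = x
    · exact Or.inr (Or.inl h2)
    · right; right; push Not at h2; exact ⟨h, h2⟩

theorem extF_inv (g : VS n S → VS n S) (hg : ∀ x, g (g x) = x) (x : Fin (2 * n)) :
    extF hS g (extF hS g x) = x := by
  rcases tri (S := S) x.val with h | ⟨s, h, he⟩ | h
  · have h1 := extF_left hS g x h
    ext
    exact extF_right hS g _ _ h h1.symm
  · have h1 := extF_right hS g x s h he
    ext
    rw [extF_left hS g _ (by rw [h1]; exact h), h1, he]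
  · rw [extF_ns hS g x h, extF_ns hS g _ (g ⟨x, h⟩).2, hg]

def extP (g : VS n S → VS n S) (hg : ∀ x, g (g x) = x) : Equiv.Perm (Fin (2 * n)) :=
  ⟨extF hS g, extF hS g, extF_inv hS g hg, extF_inv hS g hg⟩

theorem extP_spec (g : VS n S → VS n S) (hg : Good (col hS) g) :
    IsDiagram n (extP hS g hg.1) ∧ shortSet (extP hS g hg.1) = S := by
  have hnn : ∀ x : Fin (2 * n), NS S x.val → (extF hS g x).val ≠ x.val + 1 ∧ extF hS g x ≠ x := by
    intro x h
    rw [extF_ns hS g x h]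
    have h1 := hg.2 ⟨x, h⟩
    rw [Ne, col_eq] at h1
    constructor
    · intro he
      apply h1
      rw [he]
      change rk S (x.val + 1) = rk S x.val
      refine (rk_eq _ (by omega) fun s hs h5 => ?_).symm
      have : s ≠ x.val := by rintro rfl; exact h.1 hs
      omega
    · intro he
      apply h1
      rw [he]
  refine ⟨⟨extF_inv hS g hg.1, fun x => ?_⟩, ?_⟩
  · rcases tri (S := S) x.val with h | ⟨s, h, he⟩ | h
    · have h1 := extF_left hS g x h
      intro hc
      have := congrArg Fin.val hc
      change (extF hS g x).val = _ at this
      omega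
    · have h1 := extF_right hS g x s h he
      intro hc
      have := congrArg Fin.val hc
      change (extF hS g x).val = _ at this
      omega
    · exact (hnn x h).2
  · ext s
    constructor
    · intro hs
      have hlt := lt_of_mem_shortSet _ hs
      have h0 := (mem_shortSet _ ⟨s, hlt⟩).1 hs
      change (extF hS g ⟨s, hlt⟩).val = s + 1 at h0
      rcases tri (S := S) s with h | ⟨t, h, he⟩ | h
      · exact h
      · have h1 := extF_right hS g ⟨s, hlt⟩ t h he
        omega
      · exact absurd h0 (hnn ⟨s, hlt⟩ h).1
    · intro hs
      have := (hS.2 s hs).1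
      exact (mem_shortSet _ ⟨s, by omega⟩).2 (extF_left hS g _ hs)

theorem card_short : ∀ f : Equiv.Perm (Fin (2 * n)), shortChords n f = (shortSet f).card := by
  intro f
  rw [shortChords, shortSet, Finset.card_map, Nat.card_eq_fintype_card,
      Fintype.card_subtype]

def diagEquiv :
    {f : Equiv.Perm (Fin (2 * n)) // (IsDiagram n f ∧ Crystallized n f ∧ shortChords n f = k) ∧
      shortSet f = S} ≃ {g : VS n S → VS n S // Good (col hS) g} where
  toFun f := ⟨fun x => ⟨f.1 x.1, by
      have := ns_map f.1 f.2.1.1 x.1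
      rw [f.2.2] at this
      exact this x.2⟩, by
    constructor
    · intro x
      apply Subtype.ext
      exact f.2.1.1.1 x.1
    · intro x
      rw [Ne, col_eq]
      have := (cryst_iff f.1 f.2.1.1).1 f.2.1.2.1 x.1
      rw [f.2.2] at this
      exact this x.2⟩
  invFun g := ⟨extP hS g.1 g.2.1, by
    obtain ⟨h1, h2⟩ := extP_spec hS g.1 g.2
    refine ⟨⟨h1, ?_, ?_⟩, h2⟩
    · rw [cryst_iff _ h1, h2]
      intro x hx
      change rk S (extF hS g.1 x).val ≠ _
      rw [extF_ns hS g.1 x hx]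
      have := g.2.2 ⟨x, hx⟩
      rwa [Ne, col_eq] at this
    · rw [card_short, h2, hS.1]⟩
  left_inv := by
    rintro ⟨f, ⟨h1, h2, h3⟩, h4⟩
    apply Subtype.ext
    ext x
    simp only [extP, Equiv.coe_fn_mk]
    rcases tri (S := S) x.val with h | ⟨s, h, he⟩ | h
    · rw [extF_left hS _ x h]
      rw [← h4, mem_shortSet] at h
      exact h.symm
    · rw [extF_right hS _ x s h he]
      rw [← h4] at h
      have hlt := lt_of_mem_shortSet f h
      have h5 := (mem_shortSet f ⟨s, hlt⟩).1 h
      have : f ⟨s, hlt⟩ = x := by ext; simpa [he] using h5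
      rw [← this, h1.1]
    · rw [extF_ns hS _ x h]
  right_inv := by
    rintro ⟨g, hg⟩
    apply Subtype.ext
    funext x
    apply Subtype.ext
    exact extF_ns hS g x.1 x.2

end ext

section gaps
open Finset

open Classical in
noncomputable def W (n : ℕ) (S : Finset ℕ) (j : ℕ) : ℕ :=
  ((range (2 * n)).filter (fun x => NS S x ∧ rk S x = j)).card

theorem card_col {n k : ℕ} {S : Finset ℕ} (hS : Valid n k S) (j : Fin (k + 1)) :
    Nat.card {x // col hS x = j} = W n S j.val := by
  classical
  unfold W
  rw [Nat.card_eq_fintype_card, Fintype.card_subtype]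
  refine card_bij (fun x _ => x.1.val) ?_ ?_ ?_
  · intro x hx
    simp only [mem_filter, mem_univ, true_and, mem_range] at hx ⊢
    exact ⟨x.1.2, x.2, by rw [← hx]; rfl⟩
  · intro x _ y _ h
    exact Subtype.ext (Fin.ext h)
  · intro x hx
    simp only [mem_filter, mem_range] at hx
    exact ⟨⟨⟨x, hx.1⟩, hx.2.1⟩, by simpa [col, Fin.ext_iff] using hx.2.2, rfl⟩

open Classical in
theorem count_below {n k : ℕ} {S : Finset ℕ} (hS : Valid n k S) (y : ℕ)
    (hy : ∀ s ∈ S, s + 1 ≠ y) :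
    y = ((range y).filter (NS S)).card + 2 * rk S y := by
  have h1 : range y = ((range y).filter (NS S)) ∪
      (S.filter (· < y) ∪ (S.filter (· < y)).image (· + 1)) := by
    ext x
    simp only [mem_union, mem_filter, mem_range, mem_image]
    constructor
    · intro hx
      rcases tri (S := S) x with h | ⟨s, h, he⟩ | h
      · exact Or.inr (Or.inl ⟨h, hx⟩)
      · exact Or.inr (Or.inr ⟨s, ⟨h, by omega⟩, he⟩)
      · exact Or.inl ⟨hx, h⟩
    · rintro (h | h | ⟨s, h, he⟩)
      · exact h.1
      · exact h.2
      · have := hy s h.1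
        omega
  have h2 := congrArg Finset.card h1
  rw [card_range, card_union_of_disjoint, card_union_of_disjoint, card_image_of_injective] at h2
  · unfold rk; omega
  · intro a b h; simpa using h
  · rw [disjoint_left]
    intro s hs ht
    simp only [mem_filter, mem_image] at hs ht
    obtain ⟨t, ht, rfl⟩ := ht
    exact (hS.2 t ht.1).2 hs.1
  · rw [disjoint_left]
    intro s hs ht
    simp only [mem_union, mem_filter, mem_image] at hs ht
    rcases ht with h | ⟨t, ht, he⟩
    · exact hs.2.1 h.1
    · exact hs.2.2 t ht.1 he

open Classical in
theorem sum_W {n : ℕ} (S : Finset ℕ) (i : ℕ) :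
    ∑ j ∈ range (i + 1), W n S j = ((range (2 * n)).filter (fun x => NS S x ∧ rk S x ≤ i)).card := by
  rw [card_eq_sum_card_fiberwise (f := rk S) (t := range (i + 1))]
  · refine sum_congr rfl fun j hj => ?_
    unfold W
    congr 1
    ext x
    simp at hj ⊢
    constructor
    · rintro ⟨a, b, c⟩; exact ⟨⟨a, b, by omega⟩, c⟩
    · rintro ⟨⟨a, b, c⟩, d⟩; exact ⟨a, b, d⟩
  · intro x hx
    simp at hx ⊢
    omega

theorem rk_top {n k : ℕ} {S : Finset ℕ} (hS : Valid n k S) : rk S (2 * n) = k := by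
  rw [← hS.1]
  unfold rk
  congr 1
  refine filter_true_of_mem fun s hs => ?_
  have := (hS.2 s hs).1
  omega

theorem W_total {n k : ℕ} {S : Finset ℕ} (hS : Valid n k S) :
    ∑ j ∈ range (k + 1), W n S j + 2 * k = 2 * n := by
  classical
  have h := count_below hS (2 * n) (fun s hs => by have := (hS.2 s hs).1; omega)
  rw [rk_top hS] at h
  rw [sum_W]
  conv_rhs => rw [h]
  congr 2
  ext x
  simp only [mem_filter, mem_range]
  constructor
  · rintro ⟨a, b, c⟩; exact ⟨a, b⟩
  · rintro ⟨a, b⟩; exact ⟨a, b, (rk_mono S a.le).trans (rk_top hS).le⟩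

def pos (w : ℕ → ℕ) (i : ℕ) : ℕ := ∑ j ∈ range (i + 1), w j + 2 * i

theorem W_pos {n k : ℕ} {S : Finset ℕ} (hS : Valid n k S) {s : ℕ} (hs : s ∈ S) :
    pos (W n S) (rk S s) = s := by
  classical
  have h := count_below hS s (fun t ht he => (hS.2 t ht).2 (he ▸ hs))
  unfold pos
  rw [sum_W]
  conv_rhs => rw [h]
  congr 2
  ext x
  simp only [mem_filter, mem_range]
  have hsn := (hS.2 s hs).1
  constructor
  · rintro ⟨a, b, c⟩
    refine ⟨?_, b⟩
    by_contra hc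
    have hne : x ≠ s := by rintro rfl; exact b.1 hs
    have := rk_lt S hs le_rfl (show s < x by omega)
    omega
  · rintro ⟨a, b⟩; exact ⟨by omega, b, rk_mono S a.le⟩

def TT (w : ℕ → ℕ) (k : ℕ) : Finset ℕ := (range k).image (pos w)

theorem pos_lt (w : ℕ → ℕ) {i j : ℕ} (h : i < j) : pos w i + 2 ≤ pos w j := by
  unfold pos
  have : ∑ j ∈ range (i + 1), w j ≤ ∑ j ∈ range (j + 1), w j :=
    sum_le_sum_of_subset (by intro x; simp; omega)
  omega

theorem pos_inj (w : ℕ → ℕ) : Function.Injective (pos w) := by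
  intro i j h
  rcases lt_trichotomy i j with h1 | h1 | h1
  · have := pos_lt w h1; omega
  · exact h1
  · have := pos_lt w h1; omega

theorem S_unique {n k : ℕ} {S : Finset ℕ} (hS : Valid n k S) (w : ℕ → ℕ)
    (hw : ∀ j < k + 1, W n S j = w j) : S = TT w k := by
  apply eq_of_subset_of_card_le
  · intro s hs
    unfold TT
    rw [mem_image]
    have hlt : rk S s < k := by
      rw [← rk_top hS]
      exact rk_lt S hs le_rfl (by have := (hS.2 s hs).1; omega)
    refine ⟨rk S s, by simpa using hlt, ?_⟩
    rw [← W_pos hS hs, W_pos hS hs]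
    conv_rhs => rw [← W_pos hS hs]
    unfold pos
    congr 1
    refine sum_congr rfl fun j hj => (hw j ?_).symm
    simp at hj; omega
  · rw [hS.1]
    exact card_image_le.trans (by simp)

theorem TT_valid {n k : ℕ} (w : ℕ → ℕ) (hw : ∑ j ∈ range (k + 1), w j + 2 * k = 2 * n) :
    Valid n k (TT w k) := by
  constructor
  · unfold TT; rw [card_image_of_injective _ (pos_inj w), card_range]
  · intro s hs
    simp only [TT, mem_image, mem_range] at hs
    obtain ⟨i, hi, rfl⟩ := hs
    have h1 := pos_lt w hi
    have h2 : pos w k = 2 * n := hw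
    refine ⟨by omega, fun h => ?_⟩
    simp only [TT, mem_image, mem_range] at h
    obtain ⟨j, hj, he⟩ := h
    rcases lt_trichotomy i j with h1 | h1 | h1
    · have := pos_lt w h1; omega
    · subst h1; omega
    · have := pos_lt w h1; omega

theorem TT_rk {k : ℕ} (w : ℕ → ℕ) (i : ℕ) (hi : i < k) : rk (TT w k) (pos w i) = i := by
  have : (TT w k).filter (· < pos w i) = (range i).image (pos w) := by
    ext x
    simp only [TT, mem_filter, mem_image, mem_range]
    constructor
    · rintro ⟨⟨j, hj, rfl⟩, h⟩
      refine ⟨j, ?_, rfl⟩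
      by_contra hc
      rcases (not_lt.1 hc).eq_or_lt with h1 | h1
      · subst h1; omega
      · have := pos_lt w h1; omega
    · rintro ⟨j, hj, rfl⟩
      have := pos_lt w hj
      exact ⟨⟨j, by omega, rfl⟩, by omega⟩
  unfold rk
  rw [this, card_image_of_injective _ (pos_inj w), card_range]

theorem TT_W {n k : ℕ} (w : ℕ → ℕ) (hw : ∑ j ∈ range (k + 1), w j + 2 * k = 2 * n)
    (j : ℕ) (hj : j < k + 1) : W n (TT w k) j = w j := by
  have hV := TT_valid w hw
  have key : ∀ i < k + 1, ∑ j ∈ range (i + 1), W n (TT w k) j = ∑ j ∈ range (i + 1), w j := by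
    intro i hi
    rcases (Nat.lt_succ_iff.1 hi).eq_or_lt with h | h
    · subst h
      have := W_total hV
      omega
    · have := W_pos hV (s := pos w i) (by simp only [TT, mem_image, mem_range]; exact ⟨i, h, rfl⟩)
      rw [TT_rk w i h] at this
      unfold pos at this
      omega
  cases j with
  | zero => simpa using key 0 hj
  | succ j =>
    have h1 := key _ hj
    have h2 := key j (by omega)
    rw [sum_range_succ, sum_range_succ w] at h1
    omega

end gaps

theorem sum_wvec {m : ℕ} (p : Edge m → ℕ) : ∑ j, wvec p j = 2 * ∑ e, p e := by
  have h := Nat.card_congr (Equiv.sigmaFiberEquiv (colH p))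
  rw [Nat.card_sigma] at h
  simp only [card_colH] at h
  rw [h]
  simp [Nat.card_eq_fintype_card, mul_comm]

instance (n k : ℕ) : Finite {S : Finset ℕ // Valid n k S} := by
  refine Set.Finite.subset (Finset.finite_toSet (Finset.range (2 * n)).powerset) ?_
  intro S hS
  simp only [Finset.coe_powerset, Set.mem_preimage, Set.mem_powerset_iff]
  intro s hs
  have := (hS.2 s hs).1
  simp; omega

def bigEquiv (n k : ℕ) :
    {f : Equiv.Perm (Fin (2 * n)) // IsDiagram n f ∧ Crystallized n f ∧ shortChords n f = k} ≃
    Σ S : {S : Finset ℕ // Valid n k S}, {g : VS n S.1 → VS n S.1 // Good (col S.2) g} :=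
  (Equiv.sigmaFiberEquiv (fun f : {f : Equiv.Perm (Fin (2 * n)) //
      IsDiagram n f ∧ Crystallized n f ∧ shortChords n f = k} =>
      (⟨shortSet f.1, valid_shortSet f.1 f.2.1 f.2.2.2⟩ : {S : Finset ℕ // Valid n k S}))).symm.trans
  (Equiv.sigmaCongrRight fun S =>
    ((Equiv.subtypeEquivRight (fun f => Subtype.ext_iff)).trans
      (Equiv.subtypeSubtypeEquivSubtypeInter (fun f : Equiv.Perm (Fin (2 * n)) =>
        IsDiagram n f ∧ Crystallized n f ∧ shortChords n f = k) (fun f => shortSet f = S.1))).trans (diagEquiv S.2))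

def PP (n k : ℕ) : Finset (Edge (k + 1) → ℕ) :=
  (Fintype.piFinset fun _ : Edge (k + 1) => Finset.range (n - k + 1)).filter
          (fun p => ∑ e, p e = n - k)

theorem card_VS {n k : ℕ} {S : Finset ℕ} (hS : Valid n k S) :
    Nat.card (VS n S) + 2 * k = 2 * n := by
  have h := Nat.card_congr (Equiv.sigmaFiberEquiv (col hS))
  rw [Nat.card_sigma] at h
  simp only [card_col] at h
  rw [← h, Fin.sum_univ_eq_sum_range (W n S), W_total hS]

theorem card_good {n k : ℕ} {S : Finset ℕ} (hS : Valid n k S) :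
    Nat.card {g : VS n S → VS n S // Good (col hS) g} =
      ∑ p ∈ PP n k, Nat.card {g : VS n S → VS n S // Good (col hS) g ∧ typ (col hS) g = p} := by
  classical
  simp only [Nat.card_eq_fintype_card, Fintype.card_subtype]
  rw [Finset.card_eq_sum_card_fiberwise (f := typ (col hS)) (t := PP n k)]
  · simp only [Finset.filter_filter]
  · intro g hg
    simp at hg
    have h1 := (good_card (col hS) _ g hg rfl).2
    have h2 := card_VS hS
    have h3 : ∑ e, typ (col hS) g e = n - k := by omega
    simp only [PP, Finset.coe_filter, Set.mem_ofPred_eq, Fintype.mem_piFinset, Finset.mem_range]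
    refine ⟨fun e => ?_, h3⟩
    have := Finset.single_le_sum (f := typ (col hS) g) (fun _ _ => Nat.zero_le _)
      (Finset.mem_univ e)
    omega

/-- `R n k` equals the sum, over all assignments `p` of nonnegative integers to the edges of the
complete graph `K_{k+1}` with total sum `n - k`, of `(∏ⱼ wⱼ!) / (∏ᵢ pᵢ!)` where `w = B p` with
`B` the incidence matrix of `K_{k+1}`. -/
theorem R_eq_sum_multinomial (n k : ℕ) (hk : 1 ≤ k) (hn : k ≤ n) :
    (R n k : ℚ) =
      ∑ p ∈ (Fintype.piFinset fun _ : Edge (k + 1) => Finset.range (n - k + 1)).filter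
          (fun p => ∑ e, p e = n - k),
        (∏ j : Fin (k + 1), (Nat.factorial (wvec p j) : ℚ)) /
        (∏ e : Edge (k + 1), (Nat.factorial (p e) : ℚ)) := by
  classical
  have : Fintype {S : Finset ℕ // Valid n k S} := Fintype.ofFinite _
  unfold R
  rw [Nat.card_congr (bigEquiv n k), Nat.card_sigma]
  simp only [card_good]
  rw [Finset.sum_comm]
  change _ = ∑ p ∈ PP n k, _
  push_cast
  refine Finset.sum_congr rfl fun p hp => ?_
  have hsum : ∑ e, p e = n - k := by
    simp only [PP, Finset.mem_filter] at hp
    exact hp.2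
  let w : ℕ → ℕ := fun j => if h : j < k + 1 then wvec p ⟨j, h⟩ else 0
  have hw : ∀ j : Fin (k + 1), w j.val = wvec p j := fun j => by
    simp only [w]
    rw [dif_pos j.2]
  have hws : ∑ j ∈ Finset.range (k + 1), w j + 2 * k = 2 * n := by
    rw [← Fin.sum_univ_eq_sum_range]
    simp only [hw]
    rw [sum_wvec, hsum]; omega
  have hV := TT_valid w hws
  rw [Fintype.sum_eq_single ⟨TT w k, hV⟩]
  · have h1 := abs_count (col hV) p (fun j => by rw [card_col, TT_W w hws _ j.2, hw])
    rw [eq_div_iff]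
    · exact_mod_cast h1
    · exact Finset.prod_ne_zero_iff.2 fun e _ => by exact_mod_cast (Nat.factorial_pos _).ne'
  · rintro ⟨S, hS⟩ hne
    rw [Nat.cast_eq_zero]
    by_contra hc
    have : Nonempty {g : VS n S → VS n S // Good (col hS) g ∧ typ (col hS) g = p} := by
      by_contra h
      rw [not_nonempty_iff] at h
      exact hc Nat.card_of_isEmpty
    obtain ⟨g, hg, hgp⟩ := this
    apply hne
    apply Subtype.ext
    refine S_unique hS w fun j hj => ?_
    have := (good_card (col hS) p g hg hgp).1 ⟨j, hj⟩
    rw [card_col] at this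
    rw [this, ← hw]

end ChordBubbles
end

section
/- For all integers n ≥ k ≥ 1, one has (k+2) · R_{n,k} = C_{n+1,k+1,0}; that is, the number of bubbles of size zero amongst all crystallized diagrams on n+1 chords with exactly k+1 short chords equals k+2 times the number of crystallized diagrams on n chords with exactly k short chords. -/
namespace ChordBubbles

/-- A bubble of size 0: a cut position `a` with no vertices between its two delimiters, each of
which is either an end of the diagram or a short chord (a short chord ending at `a-1` on the
left, a short chord starting at `a` on the right). -/
def IsGap (n : ℕ) (f : Equiv.Perm (Fin (2 * n))) (a : ℕ) : Prop :=
  a ≤ 2 * n ∧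
  (a = 0 ∨ ∃ j : Fin (2 * n), j.val + 1 = a ∧ (f j).val + 1 = j.val) ∧
  (a = 2 * n ∨ ∃ j : Fin (2 * n), j.val = a ∧ (f j).val = j.val + 1)

/-- `C n k q` : the number of pairs (diagram, bubble of size `q`) where the diagram is a
crystallized diagram with `n` chords, exactly `k` of them short.  For `q = 0` the bubbles are
the empty gaps between consecutive short chords or between an end of the diagram and the
nearest short chord. -/
noncomputable def C (n k q : ℕ) : ℕ :=
  if q = 0 then
    Nat.card {p : Equiv.Perm (Fin (2 * n)) × ℕ //
      IsDiagram n p.1 ∧ Crystallized n p.1 ∧ shortChords n p.1 = k ∧ IsGap n p.1 p.2}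
  else
    Nat.card {p : Equiv.Perm (Fin (2 * n)) × ℕ × ℕ //
      IsDiagram n p.1 ∧ Crystallized n p.1 ∧ shortChords n p.1 = k ∧
      IsBubble n p.1 p.2.1 p.2.2 ∧ bubbleSize p.2.1 p.2.2 = q}

/-- Position shift: make room for two new vertices at `p`, `p+1`. -/
def sh (p i : ℕ) : ℕ := if i < p then i else i + 2

/-- `F` is `f` with a short chord inserted at `p`, `p+1`. -/
def Rel (n p : ℕ) (f : Equiv.Perm (Fin (2 * n))) (F : Equiv.Perm (Fin (2 * (n + 1)))) : Prop :=
  (∀ (i : Fin (2 * n)) (J : Fin (2 * (n + 1))), J.val = sh p i.val →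
    (F J).val = sh p (f i).val) ∧
  (∀ J : Fin (2 * (n + 1)), J.val = p → (F J).val = p + 1) ∧
  (∀ J : Fin (2 * (n + 1)), J.val = p + 1 → (F J).val = p)

/-- admissible gap labels -/
def Adm (n : ℕ) (f : Equiv.Perm (Fin (2 * n))) (g : ℕ) : Prop :=
  g = 2 * n + 2 ∨ g = 0 ∨ ∃ j : Fin (2 * n), j.val + 1 = g ∧ (f j).val + 1 = j.val

lemma sh_inj {p i j : ℕ} (h : sh p i = sh p j) : i = j := by
  unfold sh at h; split_ifs at h <;> omega

lemma sh_ne (p i : ℕ) : sh p i ≠ p ∧ sh p i ≠ p + 1 := by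
  unfold sh; split_ifs <;> omega

lemma sh_lt (p i n : ℕ) (h : i < 2 * n) : sh p i < 2 * (n + 1) := by
  unfold sh; split_ifs <;> omega

lemma sh_mono {p i j : ℕ} : sh p i < sh p j ↔ i < j := by
  unfold sh; split_ifs <;> omega

lemma sh_cases (n p J : ℕ) (hp : p ≤ 2 * n) (hJ : J < 2 * (n + 1)) :
    J = p ∨ J = p + 1 ∨ ∃ i : Fin (2 * n), J = sh p i.val := by
  by_cases h1 : J < p
  · exact Or.inr (Or.inr ⟨⟨J, by omega⟩, by simp [sh, h1]⟩)
  · by_cases h2 : J < p + 2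
    · omega
    · exact Or.inr (Or.inr ⟨⟨J - 2, by omega⟩, by
        have : ¬ (J - 2 < p) := by omega
        simp [sh, this]; omega⟩)

lemma exists_diag (m : ℕ) (P : Fin (2 * m) → Fin (2 * m) → Prop)
    (hs : ∀ a b, P a b → P b a) (ht : ∀ a, ∃ b, P a b)
    (hf : ∀ a b c, P a b → P a c → b = c) (hi : ∀ a, ¬ P a a) :
    ∃ F : Equiv.Perm (Fin (2 * m)), IsDiagram m F ∧ ∀ a, P a (F a) := by
  choose F hF using ht
  have hinv : Function.Involutive F := fun a => hf (F a) _ _ (hF (F a)) (hs _ _ (hF a))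
  refine ⟨hinv.toPerm F, ⟨fun i => hinv i, fun i h => hi i ?_⟩, hF⟩
  have h2 : F i = i := h
  have := hF i
  rwa [h2] at this

lemma exists_ins (n p : ℕ) (hp : p ≤ 2 * n) (f : Equiv.Perm (Fin (2 * n))) (hf : IsDiagram n f) :
    ∃ F, IsDiagram (n + 1) F ∧ Rel n p f F := by
  obtain ⟨F, hF, hP⟩ := exists_diag (n + 1) (fun J K => (J.val = p ∧ K.val = p + 1) ∨
    (J.val = p + 1 ∧ K.val = p) ∨ ∃ i, J.val = sh p i.val ∧ K.val = sh p (f i).val)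
    (by
      rintro a b (⟨h1, h2⟩ | ⟨h1, h2⟩ | ⟨i, h1, h2⟩)
      · exact Or.inr (Or.inl ⟨h2, h1⟩)
      · exact Or.inl ⟨h2, h1⟩
      · exact Or.inr (Or.inr ⟨f i, h2, by rw [hf.1]; exact h1⟩))
    (by
      intro a
      rcases sh_cases n p a.val hp a.isLt with h | h | ⟨i, h⟩
      · exact ⟨⟨p + 1, by omega⟩, Or.inl ⟨h, rfl⟩⟩
      · exact ⟨⟨p, by omega⟩, Or.inr (Or.inl ⟨h, rfl⟩)⟩
      · exact ⟨⟨sh p (f i).val, sh_lt _ _ _ (f i).isLt⟩, Or.inr (Or.inr ⟨i, h, rfl⟩)⟩)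
    (by
      rintro a b c (⟨h1, h2⟩ | ⟨h1, h2⟩ | ⟨i, h1, h2⟩) (⟨h3, h4⟩ | ⟨h3, h4⟩ | ⟨j, h3, h4⟩)
      · ext; omega
      · omega
      · have := sh_ne p j; omega
      · omega
      · ext; omega
      · have := sh_ne p j; omega
      · have := sh_ne p i; omega
      · have := sh_ne p i; omega
      · have : i = j := by ext; exact sh_inj (p := p) (by omega)
        subst this; ext; omega)
    (by
      rintro a (⟨h1, h2⟩ | ⟨h1, h2⟩ | ⟨i, h1, h2⟩)
      · omega
      · omega
      · exact hf.2 i (by ext; exact sh_inj (p := p) (by omega)))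
  refine ⟨F, hF, ?_, ?_, ?_⟩
  · intro i J hJ
    have h0 := sh_ne p i
    rcases hP J with (⟨h1, h2⟩ | ⟨h1, h2⟩ | ⟨j, h1, h2⟩)
    · omega
    · omega
    · have : i = j := by ext; exact sh_inj (p := p) (by omega)
      subst this; exact h2
  · intro J hJ
    rcases hP J with (⟨h1, h2⟩ | ⟨h1, h2⟩ | ⟨j, h1, h2⟩)
    · omega
    · omega
    · have h0 := sh_ne p j; omega
  · intro J hJ
    rcases hP J with (⟨h1, h2⟩ | ⟨h1, h2⟩ | ⟨j, h1, h2⟩)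
    · omega
    · omega
    · have h0 := sh_ne p j; omega

lemma exists_del (n p : ℕ) (hp : p ≤ 2 * n) (F : Equiv.Perm (Fin (2 * (n + 1))))
    (hF : IsDiagram (n + 1) F) (h0 : ∀ J : Fin (2 * (n + 1)), J.val = p → (F J).val = p + 1) :
    ∃ f, IsDiagram n f ∧ Rel n p f F := by
  have h1 : ∀ J : Fin (2 * (n + 1)), J.val = p + 1 → (F J).val = p := by
    intro J hJ
    have h2 := h0 ⟨p, by omega⟩ rfl
    have h3 : F ⟨p, by omega⟩ = J := by ext; omega
    rw [← h3, hF.1]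
  obtain ⟨f, hf, hP⟩ := exists_diag n (fun i k =>
      F ⟨sh p i.val, sh_lt _ _ _ i.isLt⟩ = ⟨sh p k.val, sh_lt _ _ _ k.isLt⟩)
    (by intro a b h; rw [← h, hF.1])
    (by
      intro a
      have ha := sh_ne p a
      have hinv := hF.1 ⟨sh p a.val, sh_lt _ _ _ a.isLt⟩
      rcases sh_cases n p (F ⟨sh p a.val, sh_lt _ _ _ a.isLt⟩).val hp (Fin.isLt _) with h | h | ⟨i, h⟩
      · have := h0 _ h
        rw [hinv] at this; simp at this; omega
      · have := h1 _ h
        rw [hinv] at this; simp at this; omega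
      · exact ⟨i, by ext; exact h⟩)
    (by
      intro a b c hb hc
      rw [hb] at hc
      ext
      exact sh_inj (p := p) (by simpa using hc))
    (by intro a h; exact hF.2 _ h)
  refine ⟨f, hf, ?_, h0, h1⟩
  intro i J hJ
  have : J = ⟨sh p i.val, sh_lt _ _ _ i.isLt⟩ := by ext; exact hJ
  rw [this, hP i]

lemma rel_unique_right {n p : ℕ} (hp : p ≤ 2 * n) {f F G} (h : Rel n p f F) (h' : Rel n p f G) :
    F = G := by
  ext J
  rcases sh_cases n p J.val hp J.isLt with hJ | hJ | ⟨i, hJ⟩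
  · rw [h.2.1 J hJ, h'.2.1 J hJ]
  · rw [h.2.2 J hJ, h'.2.2 J hJ]
  · rw [h.1 i J hJ, h'.1 i J hJ]

lemma rel_unique_left {n p : ℕ} {f f' F} (h : Rel n p f F) (h' : Rel n p f' F) :
    f = f' := by
  ext i
  have h1 := h.1 i ⟨sh p i.val, sh_lt _ _ _ i.isLt⟩ rfl
  have h2 := h'.1 i ⟨sh p i.val, sh_lt _ _ _ i.isLt⟩ rfl
  exact sh_inj (p := p) (by omega)

lemma low_end (P : ℕ → Prop) (i : ℕ) (h : ¬ P i) :
    ∃ a, a ≤ i ∧ (∀ j, a ≤ j → j ≤ i → ¬ P j) ∧ (a = 0 ∨ 0 < a ∧ P (a - 1)) := by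
  induction i with
  | zero => exact ⟨0, le_rfl, fun j _ h2 => by obtain rfl : j = 0 := by omega
                                               exact h, Or.inl rfl⟩
  | succ i ih =>
    by_cases hi : P i
    · refine ⟨i + 1, le_rfl, fun j h1 h2 => ?_, Or.inr ⟨by omega, hi⟩⟩
      obtain rfl : j = i + 1 := by omega
      exact h
    · obtain ⟨a, h1, h2, h3⟩ := ih hi
      refine ⟨a, by omega, fun j h4 h5 => ?_, h3⟩
      by_cases hj : j ≤ i
      · exact h2 j h4 hj
      · obtain rfl : j = i + 1 := by omega
        exact h

lemma high_end (P : ℕ → Prop) (m d : ℕ) : ∀ i, i < m → d = m - i → ¬ P i →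
    ∃ b, i ≤ b ∧ b < m ∧ (∀ j, i ≤ j → j ≤ b → ¬ P j) ∧ (b + 1 = m ∨ P (b + 1)) := by
  induction d with
  | zero => intro i h1 h2; omega
  | succ d ih =>
    intro i h1 h2 h
    by_cases hi : i + 1 = m ∨ P (i + 1)
    · refine ⟨i, le_rfl, h1, fun j h3 h4 => ?_, hi⟩
      obtain rfl : j = i := by omega
      exact h
    · push Not at hi
      obtain ⟨b, h3, h4, h5, h6⟩ := ih (i + 1) (by omega) (by omega) hi.2
      refine ⟨b, by omega, h4, fun j h7 h8 => ?_, h6⟩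
      by_cases hj : i + 1 ≤ j
      · exact h5 j hj h8
      · obtain rfl : j = i := by omega
        exact h

/-- Crystallized iff every chord covers a short end. -/
lemma cryst_iff_s9 (n : ℕ) (f : Equiv.Perm (Fin (2 * n))) (hf : IsDiagram n f) :
    Crystallized n f ↔ ∀ i : Fin (2 * n), i.val < (f i).val →
      ∃ j : Fin (2 * n), i.val ≤ j.val ∧ j.val ≤ (f i).val ∧ ShortEnd n f j := by
  constructor
  · intro hc i hi
    by_contra! hno
    obtain ⟨a, ha1, ha2, ha3⟩ := low_end (fun x => ∃ J : Fin (2 * n), J.val = x ∧ ShortEnd n f J)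
      i.val (fun ⟨J, h1, h2⟩ => hno J (by omega) (by omega) h2)
    obtain ⟨b, hb1, hb2, hb3, hb4⟩ := high_end
      (fun x => ∃ J : Fin (2 * n), J.val = x ∧ ShortEnd n f J) (2 * n) (2 * n - (f i).val)
      (f i).val (f i).isLt rfl (fun ⟨J, h1, h2⟩ => hno J (by omega) (by omega) h2)
    refine hc a b ⟨by omega, by omega, ?_, ?_, ?_⟩ i ha1 (by omega) ⟨by omega, hb1⟩
    · intro j h1 h2 h3
      by_cases h : j.val ≤ i.val
      · exact ha2 j.val h1 h ⟨j, rfl, h3⟩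
      · by_cases h' : j.val ≤ (f i).val
        · exact hno j (by omega) h' h3
        · exact hb3 j.val (by omega) h2 ⟨j, rfl, h3⟩
    · rcases ha3 with h | ⟨h, J, h1, h2⟩
      · exact Or.inl h
      · exact Or.inr ⟨J, by omega, h2⟩
    · exact hb4
  · intro h a b hb i h1 h2 ⟨h3, h4⟩
    rcases lt_or_gt_of_ne (fun e => hf.2 i (Fin.ext e)) with hlt | hlt
    · obtain ⟨j, hj1, hj2, hj⟩ := h (f i) (by rw [hf.1]; exact hlt)
      rw [hf.1] at hj2
      exact hb.2.2.1 j (by omega) (by omega) hj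
    · obtain ⟨j, hj1, hj2, hj⟩ := h i hlt
      exact hb.2.2.1 j (by omega) (by omega) hj

lemma adm_le {n g f} (h : Adm n f g) (hg : g ≠ 2 * n + 2) : g ≤ 2 * n := by
  rcases h with h | h | ⟨j, h, _⟩ <;> omega

lemma adm_pred {n g f} (h : Adm n f g) (hg : g < 2 * n + 2) (j : Fin (2 * n))
    (hj : j.val + 1 = g) : (f j).val + 1 = j.val := by
  rcases h with h | h | ⟨i, h, h'⟩
  · omega
  · omega
  · obtain rfl : i = j := by ext; omega
    exact h'

/-- no short chord of `f` is broken by the insertion -/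
lemma start_iff {n g f F} (ha : Adm n f g) (hR : Rel n (min g (2 * n)) f F)
    (i : Fin (2 * n)) (J : Fin (2 * (n + 1))) (hJ : J.val = sh (min g (2 * n)) i.val) :
    (F J).val = J.val + 1 ↔ (f i).val = i.val + 1 := by
  have h1 := hR.1 i J hJ
  have hi := i.isLt
  have hfi := (f i).isLt
  rw [h1, hJ]
  by_cases hg : g = 2 * n + 2
  · subst hg; unfold sh; split_ifs <;> omega
  · have hle := adm_le ha hg
    have h2 := adm_pred ha (by omega) i
    unfold sh; split_ifs <;> omega

lemma end_iff {n g f F} (hf : IsDiagram n f) (ha : Adm n f g) (hR : Rel n (min g (2 * n)) f F)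
    (i : Fin (2 * n)) (J : Fin (2 * (n + 1))) (hJ : J.val = sh (min g (2 * n)) i.val) :
    (F J).val + 1 = J.val ↔ (f i).val + 1 = i.val := by
  have h1 := hR.1 i J hJ
  have hi := i.isLt
  have hfi := (f i).isLt
  rw [h1, hJ]
  by_cases hg : g = 2 * n + 2
  · subst hg; unfold sh; split_ifs <;> omega
  · have hle := adm_le ha hg
    have h2 := adm_pred ha (by omega) (f i)
    rw [hf.1] at h2
    unfold sh; split_ifs <;> omega

lemma cryst_rel {n g f F} (hf : IsDiagram n f) (hF : IsDiagram (n + 1) F) (ha : Adm n f g)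
    (hR : Rel n (min g (2 * n)) f F) : Crystallized (n + 1) F ↔ Crystallized n f := by
  rw [cryst_iff_s9 _ _ hf, cryst_iff_s9 _ _ hF]
  have hp : min g (2 * n) ≤ 2 * n := by omega
  constructor
  · intro h i hi
    set I : Fin (2 * (n + 1)) := ⟨sh (min g (2 * n)) i.val, sh_lt _ _ _ i.isLt⟩ with hI
    have hFI := hR.1 i I rfl
    obtain ⟨J, h1, h2, h3⟩ := h I (by rw [hFI]; exact sh_mono.2 hi)
    rw [hFI] at h2
    by_cases hJ : ∃ j : Fin (2 * n), J.val = sh (min g (2 * n)) j.val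
    · obtain ⟨j, hj⟩ := hJ
      refine ⟨j, ?_, ?_, ?_⟩
      · by_contra hlt
        have := sh_mono (p := min g (2 * n)).2 (not_le.1 hlt)
        simp [hI] at h1; omega
      · by_contra hlt
        have := sh_mono (p := min g (2 * n)).2 (not_le.1 hlt)
        omega
      · exact h3.imp (start_iff ha hR j J hj).1 (end_iff hf ha hR j J hj).1
    · have hJ' : J.val = min g (2 * n) ∨ J.val = min g (2 * n) + 1 := by
        rcases sh_cases n _ J.val hp J.isLt with h | h | h
        · exact Or.inl h
        · exact Or.inr h
        · exact absurd h hJ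
      have hfi := (f i).isLt
      have hI' : I.val = sh (min g (2 * n)) i.val := rfl
      have h4 : i.val < min g (2 * n) ∧ min g (2 * n) ≤ (f i).val := by
        rw [hI'] at h1
        unfold sh at h1 h2
        split_ifs at h1 h2 <;> omega
      refine ⟨⟨g - 1, by omega⟩, by simp; omega, by simp; omega, Or.inr ?_⟩
      exact adm_pred ha (by omega) _ (by simp; omega)
  · intro h J hJ
    rcases sh_cases n _ J.val hp J.isLt with h1 | h1 | ⟨i, h1⟩
    · exact ⟨J, le_rfl, hJ.le, Or.inl (by rw [hR.2.1 J h1, h1])⟩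
    · exact ⟨J, le_rfl, hJ.le, Or.inr (by rw [hR.2.2 J h1, h1])⟩
    · have h2 := hR.1 i J h1
      rw [h2, h1] at hJ
      obtain ⟨j, h3, h4, h5⟩ := h i (sh_mono.1 hJ)
      refine ⟨⟨sh (min g (2 * n)) j.val, sh_lt _ _ _ j.isLt⟩, ?_, ?_, ?_⟩
      · rw [h1]; exact not_lt.1 fun hh => absurd (sh_mono.1 hh) (by omega)
      · rw [h2]; exact not_lt.1 fun hh => absurd (sh_mono.1 hh) (by omega)
      · exact h5.imp (start_iff ha hR j _ rfl).2 (end_iff hf ha hR j _ rfl).2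

lemma short_rel {n g f F} (ha : Adm n f g)
    (hR : Rel n (min g (2 * n)) f F) : shortChords (n + 1) F = shortChords n f + 1 := by
  have hp : min g (2 * n) ≤ 2 * n := by omega
  unfold shortChords
  rw [← Finite.card_option]
  symm
  apply Nat.card_congr
  refine Equiv.ofBijective (fun o => match o with
    | none => ⟨⟨min g (2 * n), by omega⟩, hR.2.1 _ rfl⟩
    | some i => ⟨⟨sh (min g (2 * n)) i.1.val, sh_lt _ _ _ i.1.isLt⟩,
        (start_iff ha hR i.1 _ rfl).2 i.2⟩) ⟨?_, ?_⟩
  · rintro (_ | i) (_ | j) h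
    · rfl
    · have := sh_ne (min g (2 * n)) j.1.val
      simp at h; omega
    · have := sh_ne (min g (2 * n)) i.1.val
      simp at h; omega
    · simp at h
      congr 1; ext; exact sh_inj h
  · rintro ⟨J, hJ⟩
    rcases sh_cases n _ J.val hp J.isLt with h1 | h1 | ⟨i, h1⟩
    · exact ⟨none, by ext; exact h1.symm⟩
    · have := hR.2.2 J h1; omega
    · exact ⟨some ⟨i, (start_iff ha hR i J h1).1 hJ⟩, by ext; exact h1.symm⟩

lemma gap_of_adm {n g f F} (hf : IsDiagram n f) (ha : Adm n f g)
    (hR : Rel n (min g (2 * n)) f F) : IsGap (n + 1) F g := by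
  by_cases hg : g = 2 * n + 2
  · subst hg
    refine ⟨by omega, Or.inr ⟨⟨2 * n + 1, by omega⟩, by simp, ?_⟩, Or.inl (by ring)⟩
    rw [hR.2.2 _ (by simp)]
    simp
  · have hle := adm_le ha hg
    have hm : min g (2 * n) = g := by omega
    refine ⟨by omega, ?_, Or.inr ⟨⟨g, by omega⟩, rfl, ?_⟩⟩
    · rcases ha with h | h | ⟨j, h, h'⟩
      · omega
      · exact Or.inl h
      · refine Or.inr ⟨⟨sh (min g (2 * n)) j.val, sh_lt _ _ _ j.isLt⟩, ?_, ?_⟩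
        · simp [sh]; split_ifs <;> omega
        · exact (end_iff hf (Or.inr (Or.inr ⟨j, h, h'⟩)) hR j _ rfl).2 h'
    · rw [hR.2.1 _ (by simp; omega)]; simp; omega

lemma short_of_gap {n g F} (hF : IsDiagram (n + 1) F) (hG : IsGap (n + 1) F g)
    (J : Fin (2 * (n + 1))) (hJ : J.val = min g (2 * n)) : (F J).val = min g (2 * n) + 1 := by
  obtain ⟨h1, h2, h3⟩ := hG
  rcases h3 with h3 | ⟨j, h3, h4⟩
  · rcases h2 with h2 | ⟨j, h2, h4⟩
    · omega
    · have : F j = J := by ext; omega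
      rw [← this, hF.1]; omega
  · have h5 := (F j).isLt
    clear h2
    have h6 : j = J := by ext; omega
    subst h6; omega

lemma adm_of_gap {n g f F} (hG : IsGap (n + 1) F g)
    (hR : Rel n (min g (2 * n)) f F) : Adm n f g := by
  obtain ⟨h1, h2, h3⟩ := hG
  rcases h3 with h3 | ⟨j, h3, h4⟩
  · left; omega
  · rcases h2 with h2 | ⟨i, h2, h5⟩
    · exact Or.inr (Or.inl h2)
    · have := (F j).isLt
      have hi : i.val < 2 * n := by omega
      refine Or.inr (Or.inr ⟨⟨i.val, hi⟩, h2, ?_⟩)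
      have h6 := hR.1 ⟨i.val, hi⟩ i (by simp [sh]; omega)
      unfold sh at h6
      split_ifs at h6 <;> simp <;> omega

lemma adm_card {n k f} (hf : IsDiagram n f) (hk : shortChords n f = k) :
    Nat.card {g : ℕ // Adm n f g} = k + 2 := by
  subst hk
  unfold shortChords
  rw [show ∀ x : ℕ, x + 2 = x + 1 + 1 from fun _ => rfl, ← Finite.card_option, ← Finite.card_option]
  symm
  apply Nat.card_congr
  refine Equiv.ofBijective (fun o => match o with
    | none => ⟨2 * n + 2, Or.inl rfl⟩
    | some none => ⟨0, Or.inr (Or.inl rfl)⟩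
    | some (some i) => ⟨i.1.val + 2, Or.inr (Or.inr ⟨f i.1, by have := i.2; omega, by
        rw [hf.1]; exact i.2.symm⟩)⟩) ⟨?_, ?_⟩
  · rintro (_ | _ | i) (_ | _ | j) h <;> replace h := congrArg Subtype.val h <;> dsimp only at h
    · rfl
    · omega
    · have := j.1.isLt; omega
    · omega
    · rfl
    · omega
    · have := i.1.isLt; omega
    · omega
    · congr 2; ext; omega
  · rintro ⟨g, h | h | ⟨j, h, h'⟩⟩
    · exact ⟨none, by ext; exact h.symm⟩
    · exact ⟨some none, by ext; exact h.symm⟩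
    · exact ⟨some (some ⟨f j, by rw [hf.1]; exact h'.symm⟩), by ext; simp; omega⟩

lemma card_left (n k : ℕ) : Nat.card {x : Equiv.Perm (Fin (2 * n)) × ℕ //
    (IsDiagram n x.1 ∧ Crystallized n x.1 ∧ shortChords n x.1 = k) ∧ Adm n x.1 x.2} =
    (k + 2) * R n k := by
  have e : {x : Equiv.Perm (Fin (2 * n)) × ℕ //
    (IsDiagram n x.1 ∧ Crystallized n x.1 ∧ shortChords n x.1 = k) ∧ Adm n x.1 x.2} ≃
    Σ f : {f : Equiv.Perm (Fin (2 * n)) //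
      IsDiagram n f ∧ Crystallized n f ∧ shortChords n f = k}, {g : ℕ // Adm n f.1 g} :=
    { toFun := fun x => ⟨⟨x.1.1, x.2.1⟩, ⟨x.1.2, x.2.2⟩⟩
      invFun := fun y => ⟨(y.1.1, y.2.1), y.1.2, y.2.2⟩
      left_inv := fun _ => rfl
      right_inv := fun _ => rfl }
  classical
  rw [Nat.card_congr e]
  have : ∀ f : {f : Equiv.Perm (Fin (2 * n)) //
      IsDiagram n f ∧ Crystallized n f ∧ shortChords n f = k},
      Finite {g : ℕ // Adm n f.1 g} := fun f =>
    Nat.finite_of_card_ne_zero (by rw [adm_card f.2.1 f.2.2.2]; omega)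
  rw [Nat.card_sigma, Finset.sum_congr rfl (fun f _ => adm_card f.2.1 f.2.2.2)]
  simp [R, mul_comm]

/-- The number of bubbles of size zero amongst all crystallized diagrams on `n+1` chords with
exactly `k+1` short chords equals `k+2` times the number of crystallized diagrams on `n` chords
with exactly `k` short chords. -/
theorem R_eq_C_zero (n k : ℕ) (hk : 1 ≤ k) (hn : k ≤ n) :
    (k + 2) * R n k = C (n + 1) (k + 1) 0 := by
  rw [← card_left]
  unfold C
  rw [if_pos rfl]
  have hp : ∀ g : ℕ, min g (2 * n) ≤ 2 * n := fun g => by omega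
  choose ins hins using fun (g : ℕ) (f : {f // IsDiagram n f}) =>
    exists_ins n (min g (2 * n)) (hp g) f.1 f.2
  apply Nat.card_congr
  refine Equiv.ofBijective (fun x => ⟨(ins x.1.2 ⟨x.1.1, x.2.1.1⟩, x.1.2), ?_⟩) ⟨?_, ?_⟩
  · obtain ⟨⟨f, g⟩, ⟨h1, h2, h3⟩, h4⟩ := x
    obtain ⟨h5, h6⟩ := hins g ⟨f, h1⟩
    exact ⟨h5, (cryst_rel h1 h5 h4 h6).2 h2, by rw [short_rel h4 h6, h3], gap_of_adm h1 h4 h6⟩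
  · rintro ⟨⟨f, g⟩, ⟨h1, h2, h3⟩, h4⟩ ⟨⟨f', g'⟩, ⟨h1', h2', h3'⟩, h4'⟩ h
    simp only [Subtype.mk.injEq, Prod.mk.injEq] at h
    obtain ⟨h5, rfl⟩ := h
    have h6 := (hins g ⟨f, h1⟩).2
    rw [h5] at h6
    have := rel_unique_left h6 (hins g ⟨f', h1'⟩).2
    simp only at this
    subst this
    rfl
  · rintro ⟨⟨F, g⟩, h1, h2, h3, h4⟩
    obtain ⟨f, hf, hR⟩ := exists_del n (min g (2 * n)) (hp g) F h1 (short_of_gap h1 h4)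
    have ha := adm_of_gap h4 hR
    refine ⟨⟨(f, g), ⟨hf, (cryst_rel hf h1 ha hR).1 h2, ?_⟩, ha⟩, ?_⟩
    · have := short_rel ha hR
      simp only at h3 ⊢
      omega
    · have := rel_unique_right (hp g) (hins g ⟨f, hf⟩).2 hR
      simp only [Subtype.mk.injEq, Prod.mk.injEq, and_true]
      exact this

end ChordBubbles
end

section
/- For every integer k ≥ 1, the E×E matrix M = (k−2)·I_E − L over ℚ is invertible, and the grand sum of its inverse satisfies j_Eᵀ·M⁻¹·j_E = −(k+1)/2, where j_E is the E×1 column vector all of whose entries are 1. -/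
open Matrix Polynomial

namespace ChordBubbles

/-- The incidence matrix of the complete graph `K_{k+1}` over `ℚ`: rows indexed by vertices,
columns by edges, with entry 1 exactly when the vertex is an endpoint of the edge. -/
def Bmat (k : ℕ) : Matrix (Fin (k + 1)) (Edge (k + 1)) ℚ :=
  Matrix.of fun v e => if v ∈ e.val then 1 else 0

/-- The adjacency matrix of the line graph of `K_{k+1}`: `L = Bᵀ·B - 2·I`. -/
def Lmat (k : ℕ) : Matrix (Edge (k + 1)) (Edge (k + 1)) ℚ :=
  (Bmat k)ᵀ * Bmat k - 2 • 1

/-- The matrix `M = (k-2)·I - L`. -/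
noncomputable def Mmat (k : ℕ) : Matrix (Edge (k + 1)) (Edge (k + 1)) ℚ :=
  ((k : ℚ) - 2) • 1 - Lmat k

lemma Bapp (k : ℕ) (v) (e : Edge (k+1)) : Bmat k v e = if v ∈ e.val then 1 else 0 := rfl

lemma colsum (k : ℕ) (e : Edge (k+1)) : ∑ v, Bmat k v e = 2 := by
  obtain ⟨a, b, hs⟩ : ∃ a b, e.val = s(a, b) := by
    generalize e.val = x
    induction x using Sym2.ind with
    | _ a b => exact ⟨a, b, rfl⟩
  have hab : a ≠ b := by
    have := e.property
    rw [hs] at this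
    simpa using this
  have : ∀ v, Bmat k v e = (if v = a then 1 else 0) + (if v = b then 1 else 0) := by
    intro v
    rw [Bapp, hs]
    simp only [Sym2.mem_iff]
    by_cases h1 : v = a <;> by_cases h2 : v = b <;> simp_all
  simp only [this, Finset.sum_add_distrib, Finset.sum_ite_eq', Finset.mem_univ, if_true]
  norm_num

lemma offdiag (k : ℕ) (v w : Fin (k+1)) (h : v ≠ w) : ∑ e, Bmat k v e * Bmat k w e = 1 := by
  obtain ⟨e₀, he⟩ : ∃ e : Edge (k+1), e.val = s(v, w) := ⟨⟨s(v, w), by simpa using h⟩, rfl⟩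
  rw [Finset.sum_eq_single e₀]
  · rw [Bapp, Bapp, he]
    simp
  · intro e _ hne
    have : ¬ (v ∈ e.val ∧ w ∈ e.val) := by
      intro hh
      exact hne (Subtype.ext (((Sym2.mem_and_mem_iff h).1 hh).trans he.symm))
    rw [Bapp, Bapp]
    by_cases h1 : v ∈ e.val <;> by_cases h2 : w ∈ e.val <;> simp_all
  · simp

lemma sqB (k : ℕ) (v : Fin (k+1)) (e) : Bmat k v e * Bmat k v e = Bmat k v e := by
  simp [Bapp]

lemma rowsum (k : ℕ) (v : Fin (k+1)) : ∑ e, Bmat k v e = k := by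
  have h1 : ∑ w, ∑ e, Bmat k v e * Bmat k w e = 2 * ∑ e, Bmat k v e := by
    rw [Finset.sum_comm, Finset.mul_sum]
    refine Finset.sum_congr rfl fun e _ => ?_
    rw [← Finset.mul_sum, colsum, mul_comm]
  rw [← Finset.add_sum_erase _ _ (Finset.mem_univ v),
    Finset.sum_congr rfl (fun w hw => offdiag k v w (Finset.ne_of_mem_erase hw).symm)] at h1
  simp only [sqB] at h1
  simp at h1
  linarith

lemma BBt (k : ℕ) : Bmat k * (Bmat k)ᵀ = ((k : ℚ) - 1) • 1 + Matrix.of fun _ _ => 1 := by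
  ext v w
  simp only [Matrix.mul_apply, Matrix.transpose_apply]
  by_cases h : v = w
  · subst h
    simp [sqB, rowsum]
  · rw [offdiag k v w h]
    simp [h]

lemma Meq (k : ℕ) : Mmat k = (k : ℚ) • 1 - (Bmat k)ᵀ * Bmat k := by
  have : (2 : ℕ) • (1 : Matrix (Edge (k+1)) (Edge (k+1)) ℚ) = (2 : ℚ) • 1 := by
    simp [two_smul]
  rw [Mmat, Lmat, this, sub_smul]
  abel

lemma cardE (k : ℕ) : 2 * (Fintype.card (Edge (k+1)) : ℚ) = (k + 1) * k := by
  have h : ∑ e, ∑ v, Bmat k v e = ∑ v, ∑ e, Bmat k v e := Finset.sum_comm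
  simp only [colsum, rowsum] at h
  simp at h
  linarith

lemma BtBBtB (k : ℕ) : (Bmat k)ᵀ * Bmat k * ((Bmat k)ᵀ * Bmat k) =
    ((k : ℚ) - 1) • ((Bmat k)ᵀ * Bmat k) + Matrix.of fun _ _ => 4 := by
  have h : (Bmat k)ᵀ * (Matrix.of fun _ _ => (1 : ℚ) : Matrix (Fin (k+1)) (Fin (k+1)) ℚ) * Bmat k = Matrix.of fun _ _ => 4 := by
    ext e f
    simp only [Matrix.mul_apply, Matrix.transpose_apply, Matrix.of_apply, mul_one, colsum,
      ← Finset.mul_sum]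
    norm_num
  calc _ = (Bmat k)ᵀ * (Bmat k * (Bmat k)ᵀ) * Bmat k := by simp only [Matrix.mul_assoc]
    _ = _ := by
      rw [BBt, Matrix.mul_add, Matrix.add_mul, h]
      simp

lemma BtBJ (k : ℕ) (c : ℚ) : (Bmat k)ᵀ * Bmat k * (Matrix.of fun _ _ => c) =
    Matrix.of fun _ _ => 2 * k * c := by
  rw [Matrix.mul_assoc]
  ext e f
  simp only [Matrix.mul_apply, Matrix.transpose_apply, Matrix.of_apply, ← Finset.sum_mul, rowsum,
    colsum]
  ring

lemma MN (k : ℕ) (hk : 1 ≤ k) : Mmat k * ((1 / k : ℚ) • (1 + (Bmat k)ᵀ * Bmat k -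
    Matrix.of fun _ _ => (4 / k : ℚ))) = 1 := by
  have hk0 : (k : ℚ) ≠ 0 := by positivity
  rw [Meq, Matrix.mul_smul, Matrix.mul_sub, Matrix.mul_add, Matrix.sub_mul, Matrix.sub_mul,
    Matrix.sub_mul, BtBBtB, BtBJ]
  ext e f
  simp
  field_simp
  ring

/-- The matrix `M = (k-2)·I - L` is invertible and the grand sum of its inverse is
`-(k+1)/2`. -/
theorem grand_sum_inverse_M (k : ℕ) (hk : 1 ≤ k) :
    IsUnit (Mmat k).det ∧ ∑ i, ∑ j, (Mmat k)⁻¹ i j = -((k : ℚ) + 1) / 2 := by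
  have hk0 : (k : ℚ) ≠ 0 := by positivity
  have hMN := MN k hk
  have hsum : ∀ f, ∑ e, Mmat k e f = -k := by
    intro f
    rw [Meq]
    simp only [Matrix.sub_apply, Finset.sum_sub_distrib, Matrix.mul_apply, Matrix.transpose_apply]
    rw [Finset.sum_comm]
    simp only [← Finset.sum_mul, rowsum, ← Finset.mul_sum, colsum]
    simp [Matrix.one_apply]
    ring
  have hu := Matrix.isUnit_det_of_right_inverse hMN
  refine ⟨hu, ?_⟩
  have h1 : ∀ j, -(k : ℚ) * ∑ i, (Mmat k)⁻¹ i j = 1 := by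
    intro j
    have h2 : ∑ e, (Mmat k * (Mmat k)⁻¹) e j = 1 := by
      rw [Matrix.mul_nonsing_inv _ hu]
      simp [Matrix.one_apply]
    simp only [Matrix.mul_apply] at h2
    rw [Finset.sum_comm] at h2
    simpa only [← Finset.sum_mul, hsum, ← Finset.mul_sum] using h2
  refine Finset.sum_comm.trans ?_
  have h3 : -(k : ℚ) * ∑ j, ∑ i, (Mmat k)⁻¹ i j = Fintype.card (Edge (k+1)) := by
    rw [Finset.mul_sum]
    simp [h1, -neg_mul]
  have h4 := cardE k
  apply mul_left_cancel₀ (neg_ne_zero.2 hk0)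
  rw [h3]
  linarith

end ChordBubbles
end
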